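/- There exist constants c > 0 and ε > 0 and, for each n ≥ 1, a conjunctive query q_n and an OWL 2 QL TBox T_n with |q_n| ≤ c·n and |T_n| ≤ c·n, such that for all sufficiently large n, every NDL-rewriting for q_n and T_n over any signature containing the symbols of q_n and T_n has size at least 2^{ε·(n/log n)^{1/12}}. -/

import Mathlib

namespace QRew

/-! ### Boolean circuits.
A Boolean circuit with inputs indexed by `ι`, advice inputs indexed by `κ` and
gates `0, …, ℓ-1` (in topological order: each gate only uses earlier gates),
with a designated output gate.  Gates are labelled `¬` (one incoming edge),
`∧`/`∨` (two incoming edges) or are Boolean constants. -/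

inductive Wire (ι κ : Type) (ℓ : ℕ) : Type
  | input : ι → Wire ι κ ℓ
  | advice : κ → Wire ι κ ℓ
  | gate : Fin ℓ → Wire ι κ ℓ
  deriving DecidableEq

inductive GateDef (ι κ : Type) (ℓ : ℕ) : Type
  | tru : GateDef ι κ ℓ
  | fls : GateDef ι κ ℓ
  | not : Wire ι κ ℓ → GateDef ι κ ℓ
  | and : Wire ι κ ℓ → Wire ι κ ℓ → GateDef ι κ ℓ
  | or : Wire ι κ ℓ → Wire ι κ ℓ → GateDef ι κ ℓ

def Wire.gateBound {ι κ : Type} {ℓ : ℕ} : Wire ι κ ℓ → ℕ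
  | .gate g => g.val + 1
  | _ => 0

def GateDef.wires {ι κ : Type} {ℓ : ℕ} : GateDef ι κ ℓ → List (Wire ι κ ℓ)
  | .tru => []
  | .fls => []
  | .not w => [w]
  | .and w w' => [w, w']
  | .or w w' => [w, w']

structure Circuit (ι κ : Type) (ℓ : ℕ) where
  gate : Fin ℓ → GateDef ι κ ℓ
  out : Fin ℓ
  topo : ∀ i : Fin ℓ, ∀ w ∈ (gate i).wires, w.gateBound ≤ i.val

def Wire.evalWith {ι κ : Type} {ℓ : ℕ} (x : ι → Bool) (y : κ → Bool)
    (v : Fin ℓ → Bool) : Wire ι κ ℓ → Bool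
  | .input i => x i
  | .advice j => y j
  | .gate g => v g

def GateDef.evalWith {ι κ : Type} {ℓ : ℕ} (x : ι → Bool) (y : κ → Bool)
    (v : Fin ℓ → Bool) : GateDef ι κ ℓ → Bool
  | .tru => true
  | .fls => false
  | .not w => ! w.evalWith x y v
  | .and w w' => w.evalWith x y v && w'.evalWith x y v
  | .or w w' => w.evalWith x y v || w'.evalWith x y v

/-- The values of the gates of the circuit, computed in `k` rounds of
evaluation (by the topological-order condition, after `ℓ` rounds every gate
has its correct value). -/
def Circuit.gateVals {ι κ : Type} {ℓ : ℕ} (C : Circuit ι κ ℓ)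
    (x : ι → Bool) (y : κ → Bool) : ℕ → Fin ℓ → Bool
  | 0 => fun _ => false
  | (k + 1) => fun g => (C.gate g).evalWith x y (C.gateVals x y k)

/-- The output of gate `g` of the circuit on input `(x, y)`. -/
def Circuit.gateVal {ι κ : Type} {ℓ : ℕ} (C : Circuit ι κ ℓ)
    (x : ι → Bool) (y : κ → Bool) (g : Fin ℓ) : Bool :=
  C.gateVals x y ℓ g

/-- The output of the circuit on input `(x, y)`. -/
def Circuit.eval {ι κ : Type} {ℓ : ℕ} (C : Circuit ι κ ℓ)
    (x : ι → Bool) (y : κ → Bool) : Bool :=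
  C.gateVal x y C.out

/-- The size of a circuit: its number of nodes (inputs, advice inputs and gates). -/
noncomputable def Circuit.size {ι κ : Type} {ℓ : ℕ} (_ : Circuit ι κ ℓ) : ℕ :=
  Nat.card ι + Nat.card κ + ℓ

/-- A monotone circuit: one with no `¬`-gates. -/
def Circuit.MonotoneC {ι κ : Type} {ℓ : ℕ} (C : Circuit ι κ ℓ) : Prop :=
  ∀ (g : Fin ℓ) (w : Wire ι κ ℓ), C.gate g ≠ .not w

/-- A circuit using only `¬`- and `∧`-gates. -/
def Circuit.OnlyNotAnd {ι κ : Type} {ℓ : ℕ} (C : Circuit ι κ ℓ) : Prop :=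
  ∀ g : Fin ℓ, (∃ w, C.gate g = .not w) ∨ (∃ w w', C.gate g = .and w w')

/-- `C` nondeterministically computes `f` : for every input `a`,
`f a = 1` iff `C(a, b) = 1` for some advice `b`. -/
def NondetComputes {ι κ : Type} {ℓ : ℕ} (C : Circuit ι κ ℓ)
    (f : (ι → Bool) → Bool) : Prop :=
  ∀ a : ι → Bool, (f a = true ↔ ∃ b : κ → Bool, C.eval a b = true)

/-- A monotone Boolean function. -/
def MonotoneFun {ι : Type} (f : (ι → Bool) → Bool) : Prop :=
  ∀ a b : ι → Bool, (∀ i, a i = true → b i = true) → f a = true → f b = true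

/-! ### Boolean formulas -/

inductive BForm (V : Type) : Type
  | var : V → BForm V
  | tru : BForm V
  | fls : BForm V
  | not : BForm V → BForm V
  | and : BForm V → BForm V → BForm V
  | or : BForm V → BForm V → BForm V

def BForm.eval {V : Type} (v : V → Bool) : BForm V → Bool
  | .var x => v x
  | .tru => true
  | .fls => false
  | .not φ => ! φ.eval v
  | .and φ ψ => φ.eval v && ψ.eval v
  | .or φ ψ => φ.eval v || ψ.eval v

/-- Truth of a Boolean formula under a `Prop`-valued assignment of the variables. -/
def BForm.holds {V : Type} (v : V → Prop) : BForm V → Prop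
  | .var x => v x
  | .tru => True
  | .fls => False
  | .not φ => ¬ φ.holds v
  | .and φ ψ => φ.holds v ∧ ψ.holds v
  | .or φ ψ => φ.holds v ∨ ψ.holds v

/-- A monotone Boolean formula: no `¬`. -/
def BForm.MonotoneF {V : Type} : BForm V → Prop
  | .var _ => True
  | .tru => True
  | .fls => True
  | .not _ => False
  | .and φ ψ => φ.MonotoneF ∧ ψ.MonotoneF
  | .or φ ψ => φ.MonotoneF ∧ ψ.MonotoneF

def BForm.size {V : Type} : BForm V → ℕ
  | .var _ => 1
  | .tru => 1
  | .fls => 1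
  | .not φ => 1 + φ.size
  | .and φ ψ => 1 + φ.size + ψ.size
  | .or φ ψ => 1 + φ.size + ψ.size

def BForm.Computes {V : Type} (φ : BForm V) (f : (V → Bool) → Bool) : Prop :=
  ∀ v : V → Bool, φ.eval v = f v

end QRew
namespace QRew

/-! ### OWL 2 QL: syntax and semantics.

A signature consists of individual constants (a type `K`), concept names
(a type `CN`) and role names (a type `RN`). -/

/-- Roles: role names and their inverses. -/
inductive Role (RN : Type) : Type
  | pos : RN → Role RN
  | inv : RN → Role RN

/-- Basic concepts: `⊥`, concept names, `∃R`. -/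
inductive BCon (CN RN : Type) : Type
  | bot : BCon CN RN
  | atom : CN → BCon CN RN
  | exr : Role RN → BCon CN RN

/-- Concepts: basic concepts and `∃R.B`. -/
inductive Con (CN RN : Type) : Type
  | bc : BCon CN RN → Con CN RN
  | exrb : Role RN → BCon CN RN → Con CN RN

/-- OWL 2 QL TBox axioms: `B ⊑ C`, `R₁ ⊑ R₂`, `B₁ ⊓ B₂ ⊑ ⊥`, `R₁ ⊓ R₂ ⊑ ⊥`. -/
inductive Ax (CN RN : Type) : Type
  | sub : BCon CN RN → Con CN RN → Ax CN RN
  | rsub : Role RN → Role RN → Ax CN RN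
  | disj : BCon CN RN → BCon CN RN → Ax CN RN
  | rdisj : Role RN → Role RN → Ax CN RN

/-- A first-order interpretation of the signature `(K, CN, RN)`,
with a nonempty domain. -/
structure Interp (K CN RN : Type) where
  Dom : Type
  ne : Nonempty Dom
  ind : K → Dom
  conc : CN → Dom → Prop
  role : RN → Dom → Dom → Prop

def Role.sem {K CN RN : Type} (I : Interp K CN RN) : Role RN → I.Dom → I.Dom → Prop
  | .pos P => I.role P
  | .inv P => fun u v => I.role P v u

def BCon.sem {K CN RN : Type} (I : Interp K CN RN) : BCon CN RN → I.Dom → Prop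
  | .bot => fun _ => False
  | .atom A => I.conc A
  | .exr R => fun u => ∃ v, R.sem I u v

def Con.sem {K CN RN : Type} (I : Interp K CN RN) : Con CN RN → I.Dom → Prop
  | .bc B => B.sem I
  | .exrb R B => fun u => ∃ v, R.sem I u v ∧ B.sem I v

def Ax.sem {K CN RN : Type} (I : Interp K CN RN) : Ax CN RN → Prop
  | .sub B c => ∀ u, B.sem I u → c.sem I u
  | .rsub R R' => ∀ u v, R.sem I u v → R'.sem I u v
  | .disj B B' => ∀ u, B.sem I u → B'.sem I u → False
  | .rdisj R R' => ∀ u v, R.sem I u v → R'.sem I u v → False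

/-- Ground atoms (ABox assertions). -/
inductive GAtom (K CN RN : Type) : Type
  | conc : CN → K → GAtom K CN RN
  | role : RN → K → K → GAtom K CN RN

def GAtom.sem {K CN RN : Type} (I : Interp K CN RN) : GAtom K CN RN → Prop
  | .conc A a => I.conc A (I.ind a)
  | .role P a b => I.role P (I.ind a) (I.ind b)

/-- An ABox: a finite set (list) of ground atoms. -/
abbrev ABox (K CN RN : Type) := List (GAtom K CN RN)

/-- First-order terms over the constants `K`. -/
inductive Term (K : Type) : Type
  | var : ℕ → Term K
  | const : K → Term K
  deriving DecidableEq

def Term.sem {K CN RN : Type} (I : Interp K CN RN) (v : ℕ → I.Dom) : Term K → I.Dom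
  | .var x => v x
  | .const a => I.ind a

/-- Atoms of conjunctive queries. -/
inductive CQAtom (K CN RN : Type) : Type
  | conc : CN → Term K → CQAtom K CN RN
  | role : RN → Term K → Term K → CQAtom K CN RN

def CQAtom.sem {K CN RN : Type} (I : Interp K CN RN) (v : ℕ → I.Dom) :
    CQAtom K CN RN → Prop
  | .conc A t => I.conc A (t.sem I v)
  | .role P t t' => I.role P (t.sem I v) (t'.sem I v)

/-- A Boolean conjunctive query: a list of atoms, all of whose variables are
(implicitly) existentially quantified. -/
abbrev CQ (K CN RN : Type) := List (CQAtom K CN RN)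

def CQ.sem {K CN RN : Type} (I : Interp K CN RN) (q : CQ K CN RN) : Prop :=
  have := I.ne
  ∃ v : ℕ → I.Dom, ∀ a ∈ q, a.sem I v

/-- Certain answer to a Boolean CQ: `(T, A) ⊨ q` iff `q` holds in every
first-order model of `T ∪ A`. -/
def Entails {K CN RN : Type} (T : List (Ax CN RN)) (A : ABox K CN RN)
    (q : CQ K CN RN) : Prop :=
  ∀ I : Interp K CN RN, (∀ ax ∈ T, ax.sem I) → (∀ g ∈ A, g.sem I) → CQ.sem I q

/-- The interpretation `I_A` of an ABox `A`: its domain consists of all the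
constants of the signature and a ground atom holds in it iff it belongs to `A`. -/
def IA {K CN RN : Type} [hK : Nonempty K] (A : ABox K CN RN) : Interp K CN RN where
  Dom := K
  ne := hK
  ind := id
  conc := fun c a => GAtom.conc c a ∈ A
  role := fun P a b => GAtom.role P a b ∈ A

/-! ### First-order formulas over a signature (no built-in predicates,
in particular no equality). -/

inductive FO (K CN RN : Type) : Type
  | conc : CN → Term K → FO K CN RN
  | role : RN → Term K → Term K → FO K CN RN
  | and : FO K CN RN → FO K CN RN → FO K CN RN
  | or : FO K CN RN → FO K CN RN → FO K CN RN
  | not : FO K CN RN → FO K CN RN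
  | ex : ℕ → FO K CN RN → FO K CN RN
  | all : ℕ → FO K CN RN → FO K CN RN

def FO.sem {K CN RN : Type} (I : Interp K CN RN) (v : ℕ → I.Dom) : FO K CN RN → Prop
  | .conc A t => I.conc A (t.sem I v)
  | .role P t t' => I.role P (t.sem I v) (t'.sem I v)
  | .and φ ψ => φ.sem I v ∧ ψ.sem I v
  | .or φ ψ => φ.sem I v ∨ ψ.sem I v
  | .not φ => ¬ φ.sem I v
  | .ex x φ => ∃ u : I.Dom, φ.sem I (Function.update v x u)
  | .all x φ => ∀ u : I.Dom, φ.sem I (Function.update v x u)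

/-- Truth of a formula in an interpretation (for sentences this is the usual
notion of truth; free variables are read universally). -/
def FO.holds {K CN RN : Type} (I : Interp K CN RN) (φ : FO K CN RN) : Prop :=
  ∀ v : ℕ → I.Dom, φ.sem I v

def Term.fv {K : Type} : Term K → Set ℕ
  | .var x => {x}
  | .const _ => ∅

/-- Free variables of a first-order formula. -/
def FO.free {K CN RN : Type} : FO K CN RN → Set ℕ
  | .conc _ t => t.fv
  | .role _ t t' => t.fv ∪ t'.fv
  | .and φ ψ => φ.free ∪ ψ.free
  | .or φ ψ => φ.free ∪ ψ.free
  | .not φ => φ.free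
  | .ex x φ => φ.free \ {x}
  | .all x φ => φ.free \ {x}

/-- Positive existential formulas: built from atoms using only `∧`, `∨`, `∃`. -/
def FO.IsPE {K CN RN : Type} : FO K CN RN → Prop
  | .conc _ _ => True
  | .role _ _ _ => True
  | .and φ ψ => φ.IsPE ∧ ψ.IsPE
  | .or φ ψ => φ.IsPE ∧ ψ.IsPE
  | .not _ => False
  | .ex _ φ => φ.IsPE
  | .all _ _ => False

/-- The size (number of symbols) of a first-order formula. -/
def FO.size {K CN RN : Type} : FO K CN RN → ℕ
  | .conc _ _ => 2
  | .role _ _ _ => 3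
  | .and φ ψ => 3 + φ.size + ψ.size
  | .or φ ψ => 3 + φ.size + ψ.size
  | .not φ => 1 + φ.size
  | .ex _ φ => 2 + φ.size
  | .all _ φ => 2 + φ.size

/-- `q'` is an FO-rewriting for the Boolean CQ `q` and the TBox `T` over the
signature `(K, CN, RN)`: for every ABox `A` over the signature,
`(T, A) ⊨ q` iff `I_A ⊨ q'`. -/
def IsFORewriting {K CN RN : Type} [Nonempty K] (T : List (Ax CN RN))
    (q : CQ K CN RN) (q' : FO K CN RN) : Prop :=
  ∀ A : ABox K CN RN, Entails T A q ↔ FO.holds (IA A) q'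

/-- A positive existential (PE-) rewriting. -/
def IsPERewriting {K CN RN : Type} [Nonempty K] (T : List (Ax CN RN))
    (q : CQ K CN RN) (q' : FO K CN RN) : Prop :=
  IsFORewriting T q q' ∧ q'.IsPE

/-! Sizes of TBoxes and queries (numbers of symbols). -/

def BCon.size {CN RN : Type} : BCon CN RN → ℕ
  | .bot => 1
  | .atom _ => 1
  | .exr _ => 2

def Con.size {CN RN : Type} : Con CN RN → ℕ
  | .bc B => B.size
  | .exrb _ B => 2 + B.size

def Ax.size {CN RN : Type} : Ax CN RN → ℕ
  | .sub B c => 1 + B.size + c.size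
  | .rsub _ _ => 3
  | .disj B B' => 2 + B.size + B'.size
  | .rdisj _ _ => 4

def tbSize {CN RN : Type} (T : List (Ax CN RN)) : ℕ := (T.map Ax.size).sum

def CQAtom.size {K CN RN : Type} : CQAtom K CN RN → ℕ
  | .conc _ _ => 2
  | .role _ _ _ => 3

def cqSize {K CN RN : Type} (q : CQ K CN RN) : ℕ := (q.map CQAtom.size).sum

/-! Maps of syntax along signature inclusions. -/

def Role.map {RN RN' : Type} (fR : RN → RN') : Role RN → Role RN'
  | .pos P => .pos (fR P)
  | .inv P => .inv (fR P)

def BCon.map {CN RN CN' RN' : Type} (fC : CN → CN') (fR : RN → RN') :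
    BCon CN RN → BCon CN' RN'
  | .bot => .bot
  | .atom A => .atom (fC A)
  | .exr R => .exr (R.map fR)

def Con.map {CN RN CN' RN' : Type} (fC : CN → CN') (fR : RN → RN') :
    Con CN RN → Con CN' RN'
  | .bc B => .bc (B.map fC fR)
  | .exrb R B => .exrb (R.map fR) (B.map fC fR)

def Ax.map {CN RN CN' RN' : Type} (fC : CN → CN') (fR : RN → RN') :
    Ax CN RN → Ax CN' RN'
  | .sub B c => .sub (B.map fC fR) (c.map fC fR)
  | .rsub R R' => .rsub (R.map fR) (R'.map fR)
  | .disj B B' => .disj (B.map fC fR) (B'.map fC fR)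
  | .rdisj R R' => .rdisj (R.map fR) (R'.map fR)

def Term.map {K K' : Type} (fK : K → K') : Term K → Term K'
  | .var x => .var x
  | .const a => .const (fK a)

def CQAtom.map {K CN RN K' CN' RN' : Type} (fK : K → K') (fC : CN → CN')
    (fR : RN → RN') : CQAtom K CN RN → CQAtom K' CN' RN'
  | .conc A t => .conc (fC A) (t.map fK)
  | .role P t t' => .role (fR P) (t.map fK) (t'.map fK)

def CQ.map {K CN RN K' CN' RN' : Type} (fK : K → K') (fC : CN → CN')
    (fR : RN → RN') (q : CQ K CN RN) : CQ K' CN' RN' :=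
  List.map (CQAtom.map fK fC fR) q

instance sumNonemptyLeft {α β : Type} [Nonempty α] : Nonempty (α ⊕ β) :=
  ⟨Sum.inl (Classical.arbitrary α)⟩

end QRew
namespace QRew

/-! ### Nonrecursive Datalog.

A Datalog program over the constants `K` uses the predicates of the data
signature (the concept names `CN` and role names `RN`) together with
arbitrary further predicates `E`. -/

/-- The predicates available to a Datalog program over the signature
`(CN, RN)` with extra (non-signature) predicates `E`. -/
abbrev DPred (CN RN E : Type) : Type := (CN ⊕ RN) ⊕ E

/-- A Datalog atom : a predicate applied to a list of terms. -/
structure DAtom (K PV : Type) : Type where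
  pred : PV
  args : List (Term K)

/-- A Horn clause `∀x̄ (A₁ ∧ … ∧ A_m → A₀)`. -/
structure DClause (K PV : Type) : Type where
  head : DAtom K PV
  body : List (DAtom K PV)

/-- A Datalog program : a finite set (list) of Horn clauses. -/
abbrev DProgram (K PV : Type) := List (DClause K PV)

/-- An interpretation of the constants `K` and the predicates `PV`. -/
structure DInterp (K PV : Type) where
  Dom : Type
  ne : Nonempty Dom
  ind : K → Dom
  pred : PV → List Dom → Prop

def Term.semD {K : Type} {Dom : Type} (ind : K → Dom) (v : ℕ → Dom) : Term K → Dom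
  | .var x => v x
  | .const a => ind a

def DAtom.sem {K PV : Type} (M : DInterp K PV) (v : ℕ → M.Dom) (a : DAtom K PV) : Prop :=
  M.pred a.pred (a.args.map (Term.semD M.ind v))

def DClause.sem {K PV : Type} (M : DInterp K PV) (cl : DClause K PV) : Prop :=
  ∀ v : ℕ → M.Dom, (∀ a ∈ cl.body, a.sem M v) → cl.head.sem M v

/-- Datalog safety: every variable of the head occurs in the body. -/
def DClause.Safe {K PV : Type} (cl : DClause K PV) : Prop :=
  ∀ x : ℕ, Term.var x ∈ cl.head.args → ∃ a ∈ cl.body, Term.var x ∈ a.args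

/-- A pure clause: no constants occur in its head. -/
def DClause.Pure {K PV : Type} (cl : DClause K PV) : Prop :=
  ∀ k : K, Term.const k ∉ cl.head.args

/-- `p` depends on `q` in `Π`: some clause of `Prog` has head predicate `p` and
an occurrence of `q` in its body. -/
def DepOn {K PV : Type} (Prog : DProgram K PV) (pq q : PV) : Prop :=
  ∃ cl ∈ Prog, cl.head.pred = pq ∧ ∃ a ∈ cl.body, a.pred = q

/-- A nonrecursive program : the dependency relation is acyclic. -/
def Nonrec {K PV : Type} (Prog : DProgram K PV) : Prop :=
  ∀ pq : PV, ¬ Relation.TransGen (DepOn Prog) pq pq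

/-- A ground ABox atom read as a Datalog fact. -/
def GAtom.semD {K CN RN E : Type} (M : DInterp K (DPred CN RN E)) :
    GAtom K CN RN → Prop
  | .conc A a => M.pred (.inl (.inl A)) [M.ind a]
  | .role P a b => M.pred (.inl (.inr P)) [M.ind a, M.ind b]

/-- `Prog, A ⊨ G` for a propositional (nullary) goal `G` : `G` holds in every
model of `Prog ∪ A`. -/
def DEntails {K CN RN E : Type} (Prog : DProgram K (DPred CN RN E))
    (A : ABox K CN RN) (G : DPred CN RN E) : Prop :=
  ∀ M : DInterp K (DPred CN RN E),
    (∀ cl ∈ Prog, cl.sem M) → (∀ g ∈ A, g.semD M) → M.pred G []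

/-- `(Prog, G)` is an NDL-rewriting for the Boolean CQ `q` and TBox `T` over the
signature `(K, CN, RN)` : it is a pure nonrecursive Datalog query (possibly
using extra predicates `E`, but no non-signature constants) such that, for
every ABox `A` over the signature, `(T, A) ⊨ q` iff `Prog, A ⊨ G`. -/
def IsNDLRewriting {K CN RN E : Type} (T : List (Ax CN RN)) (q : CQ K CN RN)
    (Prog : DProgram K (DPred CN RN E)) (G : DPred CN RN E) : Prop :=
  (∀ cl ∈ Prog, cl.Safe ∧ cl.Pure) ∧ Nonrec Prog ∧
    ∀ A : ABox K CN RN, (Entails T A q ↔ DEntails Prog A G)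

/-- The size (number of symbols) of a Datalog atom. -/
def DAtom.size {K PV : Type} (a : DAtom K PV) : ℕ := 1 + a.args.length

def DClause.size {K PV : Type} (cl : DClause K PV) : ℕ :=
  1 + cl.head.size + (cl.body.map DAtom.size).sum

/-- The size (number of symbols) of a Datalog program. -/
def progSize {K PV : Type} (Prog : DProgram K PV) : ℕ := (Prog.map DClause.size).sum

end QRew

/-!
Fix a field `F` with `p` elements and `d ≤ p`, and consider the monotone function of a set of points
of `F × F` which is true when the set contains the graph of a polynomial of degree less than `d`.
Two distinct such graphs share fewer than `d` points, and a suitable random set of points contains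
no graph at all with probability at least one half, so Razborov's method of approximations, with a
switching lemma between DNFs of small terms and CNFs of small clauses, shows that the function is
hard for monotone Horn programs.

Evaluation of a polynomial at all points of `F` is a CNF over `F`-valued variables
(the coefficients and the partial sums), and the points not in the data are clauses forbidding them.
The TBox generates the tree of all words over `F`; from a node satisfying a literal of a clause,
a path labelled by that clause leads further. The query asks for paths of full length, one along
a word and one for each clause, with a common end, so it is entailed exactly when some word
satisfies all clauses that are not waived by the data. Hence the function above is expressed by
entailment from data about a single individual. On such data every variable of a safe clause denotes
that individual, so a nonrecursive Datalog rewriting becomes an acyclic Horn program over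
propositional atoms with at most as many clauses, and the lower bound applies.
-/

namespace QRew

section Switching

variable {X : Type*}

/-- The assignment `x` satisfies the CNF whose clauses are the members of `F`. -/
def IsTransversal (F : Set (Finset X)) (x : Set X) : Prop :=
  ∀ c ∈ F, ∃ e ∈ c, e ∈ x

theorem IsTransversal.mono {F : Set (Finset X)} {x y : Set X} (h : IsTransversal F x)
    (hxy : x ⊆ y) : IsTransversal F y := fun c hc =>
  (h c hc).imp fun _ he => ⟨he.1, hxy he.2⟩

/-- The monomials with fewer than `k` variables that imply the CNF `F`. Read with the roles of
monomials and clauses exchanged, the clauses with fewer than `k` variables implied by the DNF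
`F`. -/
def smallTransversals (k : ℕ) (F : Set (Finset X)) : Set (Finset X) :=
  {m | m.card < k ∧ IsTransversal F m}

theorem smallTransversals_antitone (k : ℕ) :
    Antitone (smallTransversals k : Set (Finset X) → Set (Finset X)) :=
  fun _ _ hFG _ hm => ⟨hm.1, fun c hc => hm.2 c (hFG hc)⟩

/-- Branch over the variables of an unsatisfied clause, `k` times. -/
theorem exists_branching {F : Set (Finset X)} {s : ℕ} (hF : ∀ c ∈ F, c.card ≤ s) (k : ℕ) :
    ∀ m₀ : Finset X, ∃ D : Finset (Finset X), D.card ≤ s ^ k ∧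
      (∀ m ∈ D, m.card = m₀.card + k) ∧
      ∀ x : Set X, ↑m₀ ⊆ x → IsTransversal F x →
        (∃ m ∈ smallTransversals (m₀.card + k) F, ↑m ⊆ x) ∨ ∃ m ∈ D, ↑m ⊆ x := by
  classical
  induction k with
  | zero => exact fun m₀ => ⟨{m₀}, by simp, by simp, fun x hx _ => .inr ⟨m₀, by simp, hx⟩⟩
  | succ k ih =>
    intro m₀
    by_cases hm : IsTransversal F m₀
    · exact ⟨∅, by simp, by simp, fun x hx _ => .inl ⟨m₀, ⟨by lia, hm⟩, hx⟩⟩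
    obtain ⟨c, hc, hdisj⟩ : ∃ c ∈ F, ∀ e ∈ c, e ∉ m₀ := by simpa [IsTransversal] using hm
    have hcard : ∀ e ∈ c, (insert e m₀).card = m₀.card + 1 := fun e he =>
      Finset.card_insert_of_notMem (hdisj e he)
    choose D hD hsize hcover using ih
    refine ⟨c.biUnion fun e => D (insert e m₀), ?_, fun m hm => ?_, fun x hx hxF => ?_⟩
    · calc (c.biUnion fun e => D (insert e m₀)).card
          ≤ c.card * s ^ k := Finset.card_biUnion_le_card_mul _ _ _ fun e _ => hD _
        _ ≤ s * s ^ k := Nat.mul_le_mul_right _ (hF c hc)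
        _ = s ^ (k + 1) := (pow_succ' s k).symm
    · obtain ⟨e, he, hm⟩ := Finset.mem_biUnion.1 hm
      rw [hsize _ m hm, hcard e he, add_assoc, add_comm 1 k]
    · obtain ⟨e, hec, hex⟩ := hxF c hc
      have hsub : ↑(insert e m₀) ⊆ x := by
        simpa only [Finset.coe_insert] using Set.insert_subset hex hx
      have h := hcover (insert e m₀) x hsub hxF
      rw [hcard e hec, add_assoc, add_comm 1 k] at h
      exact h.imp_right fun ⟨m, hm, hmx⟩ => ⟨m, Finset.mem_biUnion.2 ⟨e, hec, hm⟩, hmx⟩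

/-- The monotone switching lemma of Berg and Ulfberg and of Jukna; `smallTransversals r F` is the
DNF that replaces the CNF `F`. -/
theorem exists_switching {F : Set (Finset X)} {s : ℕ} (hF : ∀ c ∈ F, c.card ≤ s) (r : ℕ) :
    ∃ D : Finset (Finset X), D.card ≤ s ^ r ∧ (∀ m ∈ D, m.card = r) ∧
      ∀ x : Set X, IsTransversal F x →
        (∃ m ∈ smallTransversals r F, ↑m ⊆ x) ∨ ∃ m ∈ D, ↑m ⊆ x := by
  simpa using exists_branching hF r ∅

end Switching

/-- A propositional Horn clause over the atoms `V`. -/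
structure HornClause (V : Type*) where
  head : V
  body : Set V

section Horn

variable {V X : Type*}

/-- Derivability of an atom from the facts `A` by the Horn clauses `P`. -/
inductive Derivable (P : Finset (HornClause V)) (A : Set V) : V → Prop
  | fact {v : V} : v ∈ A → Derivable P A v
  | clause {cl : HornClause V} :
      cl ∈ P → (∀ u ∈ cl.body, Derivable P A u) → Derivable P A cl.head

/-- A set of Horn clauses is acyclic if passing from the head of a clause to an atom of its body
cannot be repeated forever. -/
def Acyclic (P : Finset (HornClause V)) : Prop :=
  WellFounded fun u v => ∃ cl ∈ P, cl.head = v ∧ u ∈ cl.body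

/-- The monomials representing an atom `v` as a fact: the facts consist of the atoms in `base`
and of the atom `data e` for each true variable `e`. -/
def inputTerms (base : Set V) (data : X → V) (v : V) : Set (Finset X) :=
  {m | m = ∅ ∧ v ∈ base ∨ ∃ e, m = {e} ∧ data e = v}

/-- The conjunction over the body of `cl` of the DNFs `T u`, each replaced by the CNF of its
implied clauses with fewer than `s` variables. -/
def bodyCNF (s : ℕ) (T : V → Set (Finset X)) (cl : HornClause V) : Set (Finset X) :=
  ⋃ u ∈ cl.body, smallTransversals s (T u)

theorem bodyCNF_antitone (s : ℕ) (cl : HornClause V) :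
    Antitone fun T : V → Set (Finset X) => bodyCNF s T cl :=
  fun _ _ hT => Set.biUnion_mono subset_rfl fun u _ => smallTransversals_antitone s (hT u)

/-- One round of evaluation of the Horn clauses `P` on DNFs, in which each clause is evaluated
approximately: its body becomes a CNF with clauses of fewer than `s` variables, which is then
replaced by the monomials with fewer than `r` variables implying it. -/
def approxStep (P : Finset (HornClause V)) (base : Set V) (data : X → V) (r s : ℕ) :
    (V → Set (Finset X)) →o (V → Set (Finset X)) where
  toFun T v := inputTerms base data v ∪
    {m | ∃ cl ∈ P, cl.head = v ∧ m ∈ smallTransversals r (bodyCNF s T cl)}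
  monotone' _ _ hT _ := Set.union_subset_union_right _ fun _ ⟨cl, hcl, hv, hm⟩ =>
    ⟨cl, hcl, hv, smallTransversals_antitone r (bodyCNF_antitone s cl hT) hm⟩

/-- Razborov's approximators: the DNF over the variables `X` approximating the derivability of an
atom, as the result of approximate evaluation. -/
def approx (P : Finset (HornClause V)) (base : Set V) (data : X → V) (r s : ℕ) :
    V → Set (Finset X) :=
  (approxStep P base data r s).lfp

variable {P : Finset (HornClause V)} {base : Set V} {data : X → V} {r s : ℕ}

theorem mem_approx {v : V} {m : Finset X} :
    m ∈ approx P base data r s v ↔ m ∈ inputTerms base data v ∨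
      ∃ cl ∈ P, cl.head = v ∧ m ∈ smallTransversals r (bodyCNF s (approx P base data r s) cl) := by
  conv_lhs => rw [approx, ← OrderHom.map_lfp]
  rfl

theorem card_le_of_mem_approx (hr : 1 ≤ r) {v : V} {m : Finset X}
    (hm : m ∈ approx P base data r s v) : m.card ≤ r := by
  rcases mem_approx.1 hm with (⟨rfl, -⟩ | ⟨e, rfl, -⟩) | ⟨cl, -, -, hm⟩
  · simp
  · simpa using hr
  · exact hm.1.le

/-- Approximation loses a derivation only at a clause where the passage from CNF to DNF fails. -/
theorem Derivable.exists_mem_approx {x : Set X}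
    (hx : ∀ cl ∈ P, IsTransversal (bodyCNF s (approx P base data r s) cl) x →
      ∃ m ∈ smallTransversals r (bodyCNF s (approx P base data r s) cl), ↑m ⊆ x)
    {v : V} (hv : Derivable P (base ∪ data '' x) v) :
    ∃ m ∈ approx P base data r s v, ↑m ⊆ x := by
  induction hv with
  | fact h =>
    rcases h with h | ⟨e, he, rfl⟩
    · exact ⟨∅, mem_approx.2 (.inl (.inl ⟨rfl, h⟩)), by simp⟩
    · exact ⟨{e}, mem_approx.2 (.inl (.inr ⟨e, rfl, rfl⟩)), by simpa using he⟩
  | clause hcl _ ih =>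
    obtain ⟨m, hm, hmx⟩ := hx _ hcl fun c hc => by
      simp only [bodyCNF, Set.mem_iUnion] at hc
      obtain ⟨u, hu, hc⟩ := hc
      obtain ⟨m, hm, hmx⟩ := ih u hu
      exact (hc.2 m hm).imp fun e he => ⟨he.2, hmx he.1⟩
    exact ⟨m, mem_approx.2 (.inr ⟨_, hcl, rfl, hm⟩), hmx⟩

/-- The passage from DNF to CNF is exact at atoms that are not the head of any clause. -/
theorem exists_mem_inputTerms (hs : 2 ≤ s) (hdata : data.Injective) {x : Set X} {v : V}
    (hx : ∀ c ∈ smallTransversals s (inputTerms base data v), ∃ e ∈ c, e ∈ x) :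
    ∃ m ∈ inputTerms base data v, ↑m ⊆ x := by
  by_cases hbase : v ∈ base
  · exact ⟨∅, .inl ⟨rfl, hbase⟩, by simp⟩
  by_cases hv : ∃ e, data e = v
  · obtain ⟨e, rfl⟩ := hv
    refine ⟨{e}, .inr ⟨e, rfl, rfl⟩, ?_⟩
    simpa using hx {e} ⟨by simpa, by
      rintro _ (⟨-, h⟩ | ⟨e', rfl, h⟩)
      · exact absurd h hbase
      · simp [hdata h]⟩
  · obtain ⟨e, he, -⟩ := hx ∅ ⟨by rw [Finset.card_empty]; lia, by
      rintro _ (⟨-, h⟩ | ⟨e', -, h⟩)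
      · exact absurd h hbase
      · exact absurd ⟨e', h⟩ hv⟩
    simp at he

theorem exists_mem_approx (hs : 2 ≤ s) (hdata : data.Injective) {x : Set X}
    (hx : ∀ cl ∈ P, IsTransversal (approx P base data r s cl.head) xᶜ →
      ∃ c ∈ smallTransversals s (approx P base data r s cl.head), ↑c ⊆ xᶜ) {v : V}
    (hv : ∀ c ∈ smallTransversals s (approx P base data r s v), ∃ e ∈ c, e ∈ x) :
    ∃ m ∈ approx P base data r s v, ↑m ⊆ x := by
  by_cases hhead : ∃ cl ∈ P, cl.head = v
  · obtain ⟨cl, hcl, rfl⟩ := hhead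
    by_contra! hm
    obtain ⟨c, hc, hcx⟩ := hx cl hcl fun m hmv => Set.not_subset.1 (hm m hmv)
    obtain ⟨e, hec, hex⟩ := hv c hc
    exact hcx hec hex
  · have heq : approx P base data r s v = inputTerms base data v := by
      ext m
      rw [mem_approx, or_iff_left]
      exact fun ⟨cl, hcl, h, _⟩ => hhead ⟨cl, hcl, h⟩
    rw [heq] at hv ⊢
    exact exists_mem_inputTerms hs hdata hv

/-- Approximation adds a derivation only at a clause where the passage from DNF to CNF fails. -/
theorem derivable_of_mem_approx (hP : Acyclic P) (hs : 2 ≤ s) (hdata : data.Injective)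
    {x : Set X}
    (hx : ∀ cl ∈ P, IsTransversal (approx P base data r s cl.head) xᶜ →
      ∃ c ∈ smallTransversals s (approx P base data r s cl.head), ↑c ⊆ xᶜ)
    {v : V} {m : Finset X} (hm : m ∈ approx P base data r s v) (hmx : ↑m ⊆ x) :
    Derivable P (base ∪ data '' x) v := by
  induction v using hP.induction generalizing m with
  | _ v ih =>
    rcases mem_approx.1 hm with (⟨-, h⟩ | ⟨e, rfl, rfl⟩) | ⟨cl, hcl, rfl, hcov⟩
    · exact .fact (.inl h)
    · exact .fact (.inr ⟨e, by simpa using hmx, rfl⟩)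
    · refine .clause hcl fun u hu => ?_
      obtain ⟨m', hm', hmx'⟩ := exists_mem_approx hs hdata hx (v := u) fun c hc =>
        hcov.2.mono hmx c (Set.mem_biUnion hu hc)
      exact ih u ⟨cl, hcl, rfl, hu⟩ hm' hmx'

theorem exists_razborov_approximation (hP : Acyclic P) (hr : 1 ≤ r) (hs : 2 ≤ s)
    (hdata : data.Injective) (g : V) :
    ∃ D C : Finset (Finset X),
      (D.card ≤ P.card * s ^ r ∧ ∀ m ∈ D, m.card = r) ∧
      (C.card ≤ P.card * r ^ s ∧ ∀ c ∈ C, c.card = s) ∧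
      ((∀ x : Set X, Derivable P (base ∪ data '' x) g → ∃ m ∈ D, ↑m ⊆ x) ∨
        ∃ m₀ : Finset X, m₀.card ≤ r ∧ ∀ x : Set X, ↑m₀ ⊆ x →
          ¬ Derivable P (base ∪ data '' x) g → ∃ c ∈ C, ↑c ⊆ xᶜ) := by
  classical
  have hbody (cl : HornClause V) :
      ∀ c ∈ bodyCNF s (approx P base data r s) cl, c.card ≤ s := fun c hc => by
    simp only [bodyCNF, Set.mem_iUnion] at hc
    obtain ⟨u, -, hc⟩ := hc
    exact hc.1.le
  choose D hDcard hDsize hD using fun cl => exists_switching (hbody cl) r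
  choose C hCcard hCsize hC using fun cl : HornClause V =>
    exists_switching (F := approx P base data r s cl.head)
      (fun _ => card_le_of_mem_approx hr) s
  refine ⟨P.biUnion D, P.biUnion C,
    ⟨Finset.card_biUnion_le_card_mul _ _ _ fun cl _ => hDcard cl,
      by simpa using fun m cl _ => hDsize cl m⟩,
    ⟨Finset.card_biUnion_le_card_mul _ _ _ fun cl _ => hCcard cl,
      by simpa using fun c cl _ => hCsize cl c⟩, ?_⟩
  simp only [Finset.mem_biUnion]
  by_cases hg : ∃ m₀, m₀ ∈ approx P base data r s g
  · obtain ⟨m₀, hm₀⟩ := hg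
    refine .inr ⟨m₀, card_le_of_mem_approx hr hm₀, fun x hx hder => ?_⟩
    by_contra! h
    exact hder <| derivable_of_mem_approx hP hs hdata (fun cl hcl hcov =>
      (hC cl _ hcov).resolve_right fun ⟨c, hc, hcx⟩ => h c ⟨cl, hcl, hc⟩ hcx) hm₀ hx
  · refine .inl fun x hder => ?_
    by_contra! h
    obtain ⟨m, hm, -⟩ := hder.exists_mem_approx (r := r) (s := s) fun cl hcl hcov =>
      (hD cl _ hcov).resolve_right fun ⟨m, hm, hmx⟩ => h m ⟨cl, hcl, hm⟩ hmx
    exact hg ⟨m, hm⟩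

end Horn

section Density

theorem dens_piFinset {X : Type*} {β : X → Type*} [Fintype X] [DecidableEq X]
    [∀ e, Fintype (β e)] (S : ∀ e, Finset (β e)) :
    (Fintype.piFinset S).dens = ∏ e, (S e).dens := by
  simp [Finset.dens_eq_card_div_card, Finset.prod_div_distrib]

theorem dens_forall_mem {X β : Type*} [Fintype X] [DecidableEq X] [Fintype β] [Nonempty β]
    [DecidableEq β] (c : Finset X) (S : Finset β) :
    ({g | ∀ e ∈ c, g e ∈ S} : Finset (X → β)).dens = S.dens ^ c.card := by
  have h : ({g | ∀ e ∈ c, g e ∈ S} : Finset (X → β)) =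
      Fintype.piFinset fun e => if e ∈ c then S else Finset.univ := by
    ext g
    simp only [Finset.mem_filter_univ, Fintype.mem_piFinset]
    exact forall_congr' fun e => by by_cases he : e ∈ c <;> simp [he]
  simp [h, dens_piFinset, apply_ite Finset.dens]

theorem dens_forall_eq_zero {X : Type*} [Fintype X] [DecidableEq X] {M : ℕ} [NeZero M]
    (c : Finset X) :
    (({g | ∀ e ∈ c, g e = 0} : Finset (X → Fin M)).dens : ℝ) = (1 / M) ^ c.card := by
  simpa only [Finset.mem_singleton, Finset.dens_singleton, Fintype.card_fin, NNRat.cast_pow,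
    NNRat.cast_inv, NNRat.cast_natCast, one_div] using
    congrArg (NNRat.cast (K := ℝ)) (dens_forall_mem c ({0} : Finset (Fin M)))

theorem dens_forall_ne_zero_le {X : Type*} [Fintype X] [DecidableEq X] {M k : ℕ} [NeZero M]
    {c : Finset X} (hk : k ≤ c.card) :
    (({g | ∀ e ∈ c, g e ≠ 0} : Finset (X → Fin M)).dens : ℝ) ≤ (1 - 1 / M) ^ k := by
  have hcompl : ((({0}ᶜ : Finset (Fin M)).dens : ℚ≥0) : ℝ) = 1 - 1 / M := by
    rw [Finset.nnratCast_dens, Finset.card_compl, Finset.card_singleton, Fintype.card_fin,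
      Nat.cast_sub NeZero.one_le, Nat.cast_one, sub_div, div_self (NeZero.ne _)]
  have h := congrArg (NNRat.cast (K := ℝ)) (dens_forall_mem c ({0}ᶜ : Finset (Fin M)))
  simp only [Finset.mem_compl, Finset.mem_singleton, NNRat.cast_pow, hcompl] at h
  rw [h]
  refine pow_le_pow_of_le_one ?_ (by simp) hk
  rw [← hcompl]
  positivity

end Density

section Covering

variable {X ι : Type*} [Fintype ι]

theorem card_le_card_of_forall_exists_subset {Γ : ι → Finset X} {D : Finset (Finset X)}
    (hΓ : ∀ m ∈ D, ∀ a b, m ⊆ Γ a → m ⊆ Γ b → a = b) (hD : ∀ a, ∃ m ∈ D, m ⊆ Γ a) :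
    Fintype.card ι ≤ D.card := by
  choose f hf hfΓ using hD
  exact Finset.card_le_card_of_injOn f (fun a _ => hf a) fun a _ b _ hab =>
    hΓ _ (hf a) a b (hfΓ a) (hab ▸ hfΓ b)

/-- A union bound over a random assignment in which each variable is independently false with
probability `1 / M`, apart from the variables of `m₀`, which are true. -/
theorem one_le_card_mul_add_card_mul [Finite X] {Γ : ι → Finset X} {m₀ : Finset X}
    {C : Finset (Finset X)} {k s : ℕ} (M : ℕ) [NeZero M] (hΓ : ∀ a, m₀.card + k ≤ (Γ a).card)
    (hCs : ∀ c ∈ C, c.card = s)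
    (hC : ∀ x : Set X, ↑m₀ ⊆ x → (¬ ∃ a, ↑(Γ a) ⊆ x) → ∃ c ∈ C, ↑c ⊆ xᶜ) :
    (1 : ℝ) ≤ Fintype.card ι * (1 - 1 / M) ^ k + C.card * (1 / M) ^ s := by
  classical
  have := Fintype.ofFinite X
  have hcover : (Finset.univ : Finset (X → Fin M)) ⊆
      (Finset.univ.biUnion fun a => {g | ∀ e ∈ Γ a \ m₀, g e ≠ 0}) ∪
        C.biUnion fun c => {g | ∀ e ∈ c, g e = 0} := by
    intro g _
    by_cases hg : ∃ a, (Γ a : Set X) ⊆ ↑m₀ ∪ {e | g e ≠ 0}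
    · obtain ⟨a, ha⟩ := hg
      refine Finset.mem_union_left _ (Finset.mem_biUnion.2 ⟨a, Finset.mem_univ a, ?_⟩)
      simpa using fun e he hem => (ha he).resolve_left hem
    · obtain ⟨c, hc, hcg⟩ := hC _ Set.subset_union_left hg
      refine Finset.mem_union_right _ (Finset.mem_biUnion.2 ⟨c, hc, ?_⟩)
      simpa using fun e he => not_not.1 fun h => hcg he (.inr h)
  have hcard (a : ι) : k ≤ (Γ a \ m₀).card :=
    (Nat.le_sub_of_add_le' (hΓ a)).trans (Finset.le_card_sdiff m₀ (Γ a))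
  calc (1 : ℝ) = ((Finset.univ : Finset (X → Fin M)).dens : ℝ) := by simp
    _ ≤ ((∑ a, Finset.dens {g : X → Fin M | ∀ e ∈ Γ a \ m₀, g e ≠ 0} +
          ∑ c ∈ C, Finset.dens {g : X → Fin M | ∀ e ∈ c, g e = 0} : ℚ≥0) : ℝ) := by
      exact_mod_cast (Finset.dens_le_dens hcover).trans <| (Finset.dens_union_le _ _).trans <|
        add_le_add Finset.dens_biUnion_le Finset.dens_biUnion_le
    _ ≤ ∑ _a : ι, (1 - 1 / M : ℝ) ^ k + ∑ _c ∈ C, (1 / M : ℝ) ^ s := by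
      rw [NNRat.cast_add, NNRat.cast_sum, NNRat.cast_sum]
      gcongr with a _ c hc
      · exact dens_forall_ne_zero_le (hcard a)
      · rw [dens_forall_eq_zero, hCs c hc]
    _ = _ := by simp

theorem pow_le_two_mul_card [Finite X] {Γ : ι → Finset X} {m₀ : Finset X}
    {C : Finset (Finset X)} {k s M : ℕ} [NeZero M] (hΓ : ∀ a, m₀.card + k ≤ (Γ a).card)
    (hM : (Fintype.card ι : ℝ) * (1 - 1 / M) ^ k ≤ 1 / 2) (hCs : ∀ c ∈ C, c.card = s)
    (hC : ∀ x : Set X, ↑m₀ ⊆ x → (¬ ∃ a, ↑(Γ a) ⊆ x) → ∃ c ∈ C, ↑c ⊆ xᶜ) :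
    M ^ s ≤ 2 * C.card := by
  have hpos : (0 : ℝ) < M ^ s := pow_pos (Nat.cast_pos.2 (NeZero.pos M)) s
  have h : (1 / 2 : ℝ) ≤ C.card / M ^ s := by
    have := one_le_card_mul_add_card_mul M hΓ hCs hC
    rw [one_div_pow, mul_one_div] at this
    linarith
  rw [le_div_iff₀ hpos] at h
  exact_mod_cast (by linarith : (M : ℝ) ^ s ≤ 2 * C.card)

theorem pow_le_two_mul_card_mul_pow_of_derivable_iff [Finite X] {V : Type*}
    {P : Finset (HornClause V)} {base : Set V} {data : X → V} {g : V} {Γ : ι → Finset X}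
    {d k M : ℕ} [NeZero M] (hP : Acyclic P) (hdata : data.Injective) (hd : 2 ≤ d)
    (hΓ : ∀ a, d + k ≤ (Γ a).card)
    (hΓ_unique : ∀ m : Finset X, m.card = d → ∀ a b, m ⊆ Γ a → m ⊆ Γ b → a = b)
    (hι : M ^ d ≤ Fintype.card ι) (hM : (Fintype.card ι : ℝ) * (1 - 1 / M) ^ k ≤ 1 / 2)
    (hder : ∀ x : Set X, Derivable P (base ∪ data '' x) g ↔ ∃ a, ↑(Γ a) ⊆ x) :
    M ^ d ≤ 2 * (P.card * d ^ d) := by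
  obtain ⟨D, C, ⟨hDcard, hD⟩, ⟨hCcard, hC⟩, hcover | ⟨m₀, hm₀, hcover⟩⟩ :=
    exists_razborov_approximation (r := d) (s := d) hP (by lia) hd hdata g
  · have hDΓ (a : ι) : ∃ m ∈ D, m ⊆ Γ a := by
      simpa using hcover (Γ a) ((hder _).2 ⟨a, subset_rfl⟩)
    have := card_le_card_of_forall_exists_subset (fun m hm => hΓ_unique m (hD m hm)) hDΓ
    lia
  · have hm₀Γ (a : ι) : m₀.card + k ≤ (Γ a).card := by have := hΓ a; lia
    have := pow_le_two_mul_card hm₀Γ hM hC fun x hx hxΓ => hcover x hx (mt (hder x).1 hxΓ)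
    lia

end Covering

section Grounding

variable {K PV CN RN E : Type}

theorem Nonrec.wellFounded {Prog : DProgram K PV} (h : Nonrec Prog) :
    WellFounded fun q p => DepOn Prog p q := by
  let Below (q p : PV) : Prop := Relation.TransGen (DepOn Prog) p q
  have : IsTrans PV Below := ⟨fun _ _ _ hab hbc => hbc.trans hab⟩
  have : IsStrictOrder PV Below := { irrefl := h }
  have hfin (p : PV) : {q | Below q p}.Finite := by
    refine (Prog.flatMap fun cl => cl.body.map DAtom.pred).finite_toSet.subset fun q hq => ?_
    obtain ⟨_, -, cl, hcl, -, b, hb, rfl⟩ := Relation.TransGen.tail'_iff.1 hq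
    exact List.mem_flatMap.2 ⟨cl, hcl, List.mem_map_of_mem hb⟩
  refine Subrelation.wf (r := Below) .single
    ⟨fun p => (Set.WellFoundedOn.acc_iff_wellFoundedOn.out 0 2).2 ?_⟩
  rw [Relation.transGen_eq_self]
  exact (hfin p).wellFoundedOn

/-- The propositional atom standing for a Datalog atom all of whose arguments denote one fixed
individual: only the predicate and the number of arguments matter. -/
def DAtom.node (b : DAtom K PV) : PV × ℕ :=
  (b.pred, b.args.length)

/-- The body of a clause mentions no individual other than `a`. -/
def DClause.BodyOver (a : K) (cl : DClause K PV) : Prop :=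
  ∀ b ∈ cl.body, ∀ k, Term.const k ∈ b.args → k = a

/-- The propositional clause obtained by mapping all variables to one fixed individual. -/
def DClause.ground (cl : DClause K PV) : HornClause (PV × ℕ) where
  head := cl.head.node
  body := {v | ∃ b ∈ cl.body, b.node = v}

open Classical in
/-- The propositional program of a Datalog program over data whose only individual is `a`. -/
noncomputable def groundProgram (a : K) (Prog : DProgram K PV) : Finset (HornClause (PV × ℕ)) :=
  ((Prog.filter fun cl => cl.BodyOver a).map DClause.ground).toFinset

theorem mem_groundProgram {a : K} {Prog : DProgram K PV} {c : HornClause (PV × ℕ)} :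
    c ∈ groundProgram a Prog ↔ ∃ cl ∈ Prog, cl.BodyOver a ∧ cl.ground = c := by
  simp [groundProgram, and_assoc]

theorem card_groundProgram_le (a : K) (Prog : DProgram K PV) :
    (groundProgram a Prog).card ≤ Prog.length := by
  classical
  calc (groundProgram a Prog).card ≤ _ := List.toFinset_card_le _
    _ ≤ Prog.length := by simpa using List.length_filter_le _ _

theorem acyclic_groundProgram {Prog : DProgram K PV} (h : Nonrec Prog) (a : K) :
    Acyclic (groundProgram a Prog) := by
  refine Subrelation.wf (fun {u v} huv => ?_) (InvImage.wf Prod.fst h.wellFounded)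
  obtain ⟨_, hcl, rfl, hu⟩ := huv
  obtain ⟨cl, hclP, -, rfl⟩ := mem_groundProgram.1 hcl
  obtain ⟨b, hb, rfl⟩ := hu
  exact ⟨cl, hclP, rfl, b, hb, rfl⟩

theorem DAtom.sem_const_iff {M : DInterp K PV} {a : K} {b : DAtom K PV}
    (hb : ∀ k, Term.const k ∈ b.args → k = a) :
    b.sem M (fun _ => M.ind a) ↔ M.pred b.node.1 (List.replicate b.node.2 (M.ind a)) := by
  have hargs : b.args.map (Term.semD M.ind fun _ => M.ind a) =
      List.replicate b.args.length (M.ind a) := by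
    refine List.map_eq_replicate_iff.2 fun t ht => ?_
    cases t with
    | var x => rfl
    | const k => exact congrArg M.ind (hb k ht)
  rw [DAtom.sem, hargs, DAtom.node]

theorem pred_of_derivable_groundProgram {Prog : DProgram K PV} (hpure : ∀ cl ∈ Prog, cl.Pure)
    {a : K} {M : DInterp K PV} (hM : ∀ cl ∈ Prog, cl.sem M) {A : Set (PV × ℕ)}
    (hA : ∀ v ∈ A, M.pred v.1 (List.replicate v.2 (M.ind a))) {v : PV × ℕ}
    (hv : Derivable (groundProgram a Prog) A v) :
    M.pred v.1 (List.replicate v.2 (M.ind a)) := by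
  induction hv with
  | fact h => exact hA _ h
  | clause hcl _ ih =>
    obtain ⟨cl, hclP, hover, rfl⟩ := mem_groundProgram.1 hcl
    refine (DAtom.sem_const_iff fun k hk => absurd hk (hpure cl hclP k)).1 <|
      hM cl hclP (fun _ => M.ind a) fun b hb => ?_
    exact (DAtom.sem_const_iff (hover b hb)).2 (ih b.node ⟨b, hb, rfl⟩)

/-- The least model of a Datalog program over the facts `A` about the individual `a`: nothing
holds of any other individual. -/
def leastModel (a : K) (Prog : DProgram K PV) (A : Set (PV × ℕ)) : DInterp K PV where
  Dom := K
  ne := ⟨a⟩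
  ind := id
  pred p l := (∀ u ∈ l, u = a) ∧ Derivable (groundProgram a Prog) A (p, l.length)

theorem pred_leastModel_replicate {a : K} {Prog : DProgram K PV} {A : Set (PV × ℕ)} {p : PV}
    {n : ℕ} : (leastModel a Prog A).pred p (List.replicate n a) ↔
      Derivable (groundProgram a Prog) A (p, n) := by
  simp [leastModel]

theorem atom_sem_leastModel {a : K} {Prog : DProgram K PV} {A : Set (PV × ℕ)} {v : ℕ → K}
    {b : DAtom K PV} : b.sem (leastModel a Prog A) v ↔
      (∀ t ∈ b.args, t.semD id v = a) ∧ Derivable (groundProgram a Prog) A b.node := by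
  simp [DAtom.sem, leastModel, DAtom.node]

theorem clause_sem_leastModel {a : K} {Prog : DProgram K PV} {A : Set (PV × ℕ)}
    {cl : DClause K PV} (hcl : cl ∈ Prog) (hsafe : cl.Safe) (hpure : cl.Pure) :
    cl.sem (leastModel a Prog A) := by
  intro v hbody
  replace hbody b (hb : b ∈ cl.body) := atom_sem_leastModel.1 (hbody b hb)
  have hover : cl.BodyOver a := fun b hb _ hk => (hbody b hb).1 _ hk
  refine atom_sem_leastModel.2 ⟨fun t ht => ?_, ?_⟩
  · cases t with
    | const k => exact absurd ht (hpure k)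
    | var x =>
      obtain ⟨b, hb, hx⟩ := hsafe x ht
      exact (hbody b hb).1 _ hx
  · refine .clause (mem_groundProgram.2 ⟨cl, hcl, hover, rfl⟩) ?_
    rintro _ ⟨b, hb, rfl⟩
    exact (hbody b hb).2

/-- A ground atom mentions no individual other than `a`. -/
def GAtom.Over (a : K) : GAtom K CN RN → Prop
  | .conc _ b => b = a
  | .role _ b c => b = a ∧ c = a

/-- The propositional atom standing for a ground atom about one fixed individual. -/
def GAtom.node : GAtom K CN RN → DPred CN RN E × ℕ
  | .conc A _ => (.inl (.inl A), 1)
  | .role P _ _ => (.inl (.inr P), 2)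

theorem GAtom.semD_iff {M : DInterp K (DPred CN RN E)} {a : K} {g : GAtom K CN RN}
    (hg : g.Over a) : g.semD M ↔
      M.pred (g.node (E := E)).1 (List.replicate (g.node (E := E)).2 (M.ind a)) := by
  cases g with
  | conc A b => cases hg; rfl
  | role P b c => obtain ⟨rfl, rfl⟩ := hg; rfl

theorem dEntails_iff_derivable {Prog : DProgram K (DPred CN RN E)}
    (hProg : ∀ cl ∈ Prog, cl.Safe ∧ cl.Pure) {a : K} {A : ABox K CN RN}
    (hA : ∀ g ∈ A, g.Over a) (G : DPred CN RN E) :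
    DEntails Prog A G ↔ Derivable (groundProgram a Prog) {v | ∃ g ∈ A, g.node = v} (G, 0) := by
  constructor
  · refine fun h => (h (leastModel a Prog _) (fun cl hcl => ?_) fun g hg => ?_).2
    · exact clause_sem_leastModel hcl (hProg cl hcl).1 (hProg cl hcl).2
    · exact (GAtom.semD_iff (hA g hg)).2 (pred_leastModel_replicate.2 (.fact ⟨g, hg, rfl⟩))
  · intro h M hM hMA
    refine pred_of_derivable_groundProgram (fun cl hcl => (hProg cl hcl).2) hM ?_ h
    rintro _ ⟨g, hg, rfl⟩
    exact (GAtom.semD_iff (hA g hg)).1 (hMA g hg)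

end Grounding

section Reduct

variable {K CN RN K' CN' RN' : Type} (fK : K → K') (fC : CN → CN') (fR : RN → RN')

/-- The reduct of an interpretation along a map of signatures. -/
def Interp.comap (I : Interp K' CN' RN') : Interp K CN RN where
  Dom := I.Dom
  ne := I.ne
  ind k := I.ind (fK k)
  conc A := I.conc (fC A)
  role P := I.role (fR P)

/-- The translation of a ground atom along a map of signatures. -/
def GAtom.map : GAtom K CN RN → GAtom K' CN' RN'
  | .conc A a => .conc (fC A) (fK a)
  | .role P a b => .role (fR P) (fK a) (fK b)

variable (I : Interp K' CN' RN')

theorem Role.sem_map (R : Role RN) : (R.map fR).sem I = R.sem (I.comap fK fC fR) := by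
  cases R <;> rfl

theorem BCon.sem_map (B : BCon CN RN) : (B.map fC fR).sem I = B.sem (I.comap fK fC fR) := by
  cases B with
  | bot => rfl
  | atom A => rfl
  | exr R => simp only [BCon.map, BCon.sem, Role.sem_map fK fC fR]; rfl

theorem Con.sem_map (c : Con CN RN) : (c.map fC fR).sem I = c.sem (I.comap fK fC fR) := by
  cases c with
  | bc B => exact BCon.sem_map fK fC fR I B
  | exrb R B => simp only [Con.map, Con.sem, Role.sem_map fK fC fR, BCon.sem_map fK fC fR]; rfl

theorem Ax.sem_map (ax : Ax CN RN) : (ax.map fC fR).sem I ↔ ax.sem (I.comap fK fC fR) := by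
  cases ax with
  | sub B c => simp only [Ax.map, Ax.sem, BCon.sem_map fK, Con.sem_map fK]; rfl
  | rsub R R' => simp only [Ax.map, Ax.sem, Role.sem_map fK fC]; rfl
  | disj B B' => simp only [Ax.map, Ax.sem, BCon.sem_map fK]; rfl
  | rdisj R R' => simp only [Ax.map, Ax.sem, Role.sem_map fK fC]; rfl

theorem GAtom.sem_map (g : GAtom K CN RN) :
    (g.map fK fC fR).sem I ↔ g.sem (I.comap fK fC fR) := by
  cases g <;> rfl

theorem Term.sem_map (v : ℕ → I.Dom) (t : Term K) :
    (t.map fK).sem I v = t.sem (I.comap fK fC fR) v := by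
  cases t <;> rfl

theorem CQAtom.sem_map (v : ℕ → I.Dom) (a : CQAtom K CN RN) :
    (a.map fK fC fR).sem I v ↔ a.sem (I.comap fK fC fR) v := by
  cases a <;> simp only [CQAtom.map, CQAtom.sem, Term.sem_map fK fC fR] <;> rfl

theorem CQ.sem_map (q : CQ K CN RN) :
    CQ.sem I (q.map fK fC fR) ↔ CQ.sem (I.comap fK fC fR) q := by
  simp only [CQ.sem, CQ.map, List.forall_mem_map, CQAtom.sem_map]
  rfl

end Reduct

section Expansion

variable {K CN RN EK EC ER : Type}

/-- The expansion of an interpretation to a larger signature in which the new concept and role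
names are empty. -/
noncomputable def Interp.expand (EK EC ER : Type) (I : Interp K CN RN) :
    Interp (K ⊕ EK) (CN ⊕ EC) (RN ⊕ ER) where
  Dom := I.Dom
  ne := I.ne
  ind := Sum.elim I.ind fun _ => I.ne.some
  conc := Sum.elim I.conc fun _ _ => False
  role := Sum.elim I.role fun _ _ _ => False

theorem Interp.comap_expand (I : Interp K CN RN) :
    (I.expand EK EC ER).comap .inl .inl .inl = I := rfl

theorem entails_map_inl_iff {T : List (Ax CN RN)} {A : ABox K CN RN} {q : CQ K CN RN} :
    Entails (K := K ⊕ EK) (T.map (Ax.map (CN' := CN ⊕ EC) (RN' := RN ⊕ ER) .inl .inl))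
      (A.map (GAtom.map .inl .inl .inl)) (q.map .inl .inl .inl) ↔ Entails T A q := by
  constructor
  · intro h I hT hA
    have := h (I.expand EK EC ER) (by simpa [Ax.sem_map (K' := K ⊕ EK) .inl, Interp.comap_expand])
      (by simpa [GAtom.sem_map, Interp.comap_expand])
    simpa only [CQ.sem_map, Interp.comap_expand] using this
  · intro h I hT hA
    refine (CQ.sem_map _ _ _ I q).2 (h _ ?_ ?_)
    · exact fun ax hax => (Ax.sem_map _ _ _ I ax).1 (hT _ (List.mem_map_of_mem hax))
    · exact fun g hg => (GAtom.sem_map _ _ _ I g).1 (hA _ (List.mem_map_of_mem hg))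

end Expansion

/-- The concept names of the path encoding: the nodes of a given depth, the nodes with a given
depth and last letter, and the nodes of a given depth from which the descending path of a given
clause starts. -/
inductive PathConcept (S J : Type) : Type
  | node : ℕ → PathConcept S J
  | letter : ℕ → S → PathConcept S J
  | clause : ℕ → J → PathConcept S J

section PathEncoding

open PathConcept

variable {S J : Type}

/-- The axioms generating the tree of all words of length `L`; the role `l` leads from depth `l`
to depth `l + 1`. -/
noncomputable def treeAxioms (S J : Type) [Fintype S] (L : ℕ) : List (Ax (PathConcept S J) ℕ) :=
  (Finset.range L ×ˢ (Finset.univ : Finset S)).toList.flatMap fun p =>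
    [.sub (.atom (node p.1)) (.exrb (.pos p.1) (.atom (letter (p.1 + 1) p.2))),
      .sub (.atom (letter (p.1 + 1) p.2)) (.bc (.atom (node (p.1 + 1))))]

/-- The axioms marking a word with the clauses that its last letter satisfies. Clause `j` is
satisfied by `y` if `y l = σ` for some `(l, σ) ∈ C j`. -/
noncomputable def literalAxioms [Fintype J] (C : J → Finset (ℕ × S)) :
    List (Ax (PathConcept S J) ℕ) :=
  ((Finset.univ : Finset J).sigma C).toList.map fun p =>
    .sub (.atom (letter (p.2.1 + 1) p.2.2)) (.bc (.atom (clause (p.2.1 + 1) p.1)))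

/-- The axioms generating a path from depth `0` to each node marked with a clause. -/
noncomputable def chainAxioms (S J : Type) [Fintype J] (L : ℕ) : List (Ax (PathConcept S J) ℕ) :=
  ((Finset.univ : Finset J) ×ˢ Finset.range L).toList.map fun p =>
    .sub (.atom (clause (p.2 + 1) p.1)) (.exrb (.inv p.2) (.atom (clause p.2 p.1)))

/-- The TBox of the path encoding of the clauses `C` on words of length `L`. -/
noncomputable def pathTBox [Fintype S] [Fintype J] (L : ℕ) (C : J → Finset (ℕ × S)) :
    List (Ax (PathConcept S J) ℕ) :=
  treeAxioms S J L ++ literalAxioms C ++ chainAxioms S J L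

/-- The data of the path encoding: a single individual, at which the clauses in `X` are waived. -/
noncomputable def pathABox (S : Type) (X : Finset J) : ABox Unit (PathConcept S J) ℕ :=
  .conc (node 0) () :: X.toList.map fun j => .conc (clause 0 j) ()

/-- The variable at depth `l` of the main path (`none`) or of the path of a clause; all paths
share their last variable. -/
noncomputable def pathVar [Fintype J] (L : ℕ) (o : Option J) (l : ℕ) : ℕ :=
  Nat.pair (Fintype.equivFin (Option J) (if l = L then none else o)) l

/-- The part of the path query about one path: it has length `L` and starts in the concept that
belongs to it. -/
noncomputable def chainCQ (S : Type) [Fintype J] (L : ℕ) (o : Option J) :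
    CQ Unit (PathConcept S J) ℕ :=
  .conc (o.elim (node 0) (clause 0)) (.var (pathVar L o 0)) ::
    (List.range L).map fun l => .role l (.var (pathVar L o l)) (.var (pathVar L o (l + 1)))

/-- The query of the path encoding: paths of length `L`, one for the word and one for every
clause, with a common end. -/
noncomputable def pathCQ (S J : Type) [Fintype J] (L : ℕ) : CQ Unit (PathConcept S J) ℕ :=
  (Finset.univ : Finset (Option J)).toList.flatMap (chainCQ S L)

theorem tbSize_pathTBox [Fintype S] [Fintype J] (L : ℕ) (C : J → Finset (ℕ × S)) :
    tbSize (pathTBox L C) =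
      L * Fintype.card S * 8 + (∑ j, (C j).card) * 3 + Fintype.card J * L * 5 := by
  simp [tbSize, pathTBox, treeAxioms, literalAxioms, chainAxioms, List.flatMap,
    Function.comp_def, Ax.size, Con.size, BCon.size, add_assoc]

theorem cqSize_pathCQ [Fintype J] (L : ℕ) :
    cqSize (pathCQ S J L) = (Fintype.card J + 1) * (2 + L * 3) := by
  simp [cqSize, pathCQ, chainCQ, List.flatMap, Function.comp_def, CQAtom.size]

variable {I : Interp Unit (PathConcept S J) ℕ} {L : ℕ} {C : J → Finset (ℕ × S)} {X : Finset J}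

theorem forall_mem_pathTBox_sem_iff [Fintype S] [Fintype J] :
    (∀ ax ∈ pathTBox L C, ax.sem I) ↔
      (∀ l < L, ∀ σ u, I.conc (node l) u → ∃ v, I.role l u v ∧ I.conc (letter (l + 1) σ) v) ∧
      (∀ l < L, ∀ σ u, I.conc (letter (l + 1) σ) u → I.conc (node (l + 1)) u) ∧
      (∀ j, ∀ p ∈ C j, ∀ u, I.conc (letter (p.1 + 1) p.2) u → I.conc (clause (p.1 + 1) j) u) ∧
      ∀ j, ∀ l < L, ∀ u, I.conc (clause (l + 1) j) u →
        ∃ v, I.role l v u ∧ I.conc (clause l j) v := by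
  simp only [pathTBox, treeAxioms, literalAxioms, chainAxioms, List.forall_mem_append,
    List.forall_mem_flatMap, List.forall_mem_map, List.forall_mem_cons, List.not_mem_nil,
    Finset.mem_toList, Finset.mem_product, Finset.mem_sigma, Finset.mem_range, Finset.mem_univ,
    true_and, and_true, Prod.forall, Sigma.forall, forall_and, and_assoc, false_imp_iff,
    implies_true]
  constructor
  · rintro ⟨h₁, h₂, h₃, h₄⟩
    exact ⟨fun l hl σ => h₁ l σ hl, fun l hl σ => h₂ l σ hl, h₃, h₄⟩
  · rintro ⟨h₁, h₂, h₃, h₄⟩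
    exact ⟨fun l σ hl => h₁ l hl σ, fun l σ hl => h₂ l hl σ, h₃, h₄⟩

theorem forall_mem_pathABox_sem_iff :
    (∀ g ∈ pathABox S X, g.sem I) ↔
      I.conc (node 0) (I.ind ()) ∧ ∀ j ∈ X, I.conc (clause 0 j) (I.ind ()) := by
  simp [pathABox, GAtom.sem]

/-- The elements `z 0, …, z L` form a path along the roles `0, …, L - 1`. -/
def Interp.IsPath {K CN : Type} (I : Interp K CN ℕ) (L : ℕ) (z : ℕ → I.Dom) : Prop :=
  ∀ l < L, I.role l (z l) (z (l + 1))

theorem forall_mem_chainCQ_sem_iff [Fintype J] {o : Option J} {v : ℕ → I.Dom} :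
    (∀ a ∈ chainCQ S L o, a.sem I v) ↔ I.conc (o.elim (node 0) (clause 0)) (v (pathVar L o 0)) ∧
      I.IsPath L fun l => v (pathVar L o l) := by
  simp [chainCQ, CQAtom.sem, Term.sem, Interp.IsPath]

theorem sem_pathCQ_iff [Fintype J] :
    CQ.sem I (pathCQ S J L) ↔ ∃ w, I.conc (node 0) (w 0) ∧ I.IsPath L w ∧
      ∀ j, ∃ z, z L = w L ∧ I.conc (clause 0 j) (z 0) ∧ I.IsPath L z := by
  have hsem : CQ.sem I (pathCQ S J L) ↔ ∃ v : ℕ → I.Dom, ∀ o : Option J,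
      I.conc (o.elim (node 0) (clause 0)) (v (pathVar L o 0)) ∧
        I.IsPath L fun l => v (pathVar L o l) := by
    refine exists_congr fun v => ?_
    simp only [pathCQ, List.forall_mem_flatMap, Finset.mem_toList, Finset.mem_univ, true_imp_iff,
      forall_mem_chainCQ_sem_iff]
  rw [hsem]
  constructor
  · rintro ⟨v, h⟩
    exact ⟨fun l => v (pathVar L none l), (h none).1, (h none).2, fun j =>
      ⟨fun l => v (pathVar L (some j) l), by simp [pathVar], h (some j)⟩⟩
  · rintro ⟨w, hw₀, hw, h⟩
    choose z hzL hz₀ hz using h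
    let path : Option J → ℕ → I.Dom := fun o => o.elim w z
    let v : ℕ → I.Dom := fun n => (Function.extend (fun o => (Fintype.equivFin (Option J) o : ℕ))
      path fun _ => w) n.unpair.1 n.unpair.2
    have hv : ∀ o l, v (pathVar L o l) = path o l := by
      intro o l
      have hinj : (fun o => (Fintype.equivFin (Option J) o : ℕ)).Injective :=
        Fin.val_injective.comp (Fintype.equivFin _).injective
      simp only [v, pathVar, Nat.unpair_pair, hinj.extend_apply]
      split_ifs with hl
      · cases o <;> simp [path, hl, hzL]
      · rfl
    refine ⟨v, fun o => ?_⟩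
    simp only [hv]
    cases o with
    | none => exact ⟨hw₀, hw⟩
    | some j => exact ⟨hz₀ j, hz j⟩

theorem exists_isPath_of_children {I : Interp Unit (PathConcept S J) ℕ}
    (hchild : ∀ l < L, ∀ σ u, I.conc (node l) u →
      ∃ v, I.role l u v ∧ I.conc (letter (l + 1) σ) v)
    (hnode : ∀ l < L, ∀ σ u, I.conc (letter (l + 1) σ) u → I.conc (node (l + 1)) u)
    {u : I.Dom} (hu : I.conc (node 0) u) (y : ℕ → S) :
    ∃ w, w 0 = u ∧ I.IsPath L w ∧ ∀ l < L, I.conc (letter (l + 1) (y l)) (w (l + 1)) := by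
  choose! child hrole hletter using hchild
  let w : ℕ → I.Dom := fun l => Nat.rec u (fun l x => child l (y l) x) l
  have hw : ∀ l ≤ L, I.conc (node l) (w l) := by
    intro l
    induction l with
    | zero => exact fun _ => hu
    | succ l ih => exact fun hl => hnode l hl _ _ (hletter l hl (y l) _ (ih (by omega)))
  exact ⟨w, rfl, fun l hl => hrole l hl _ _ (hw l hl.le),
    fun l hl => hletter l hl _ _ (hw l hl.le)⟩

theorem exists_isPath_of_conc_clause {j : J}
    (hchain : ∀ l < L, ∀ u, I.conc (clause (l + 1) j) u →
      ∃ v, I.role l v u ∧ I.conc (clause l j) v) {k : ℕ} (hk : k ≤ L) {w : ℕ → I.Dom}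
    (hw : ∀ l, k ≤ l → l < L → I.role l (w l) (w (l + 1))) (hwk : I.conc (clause k j) (w k)) :
    ∃ z, z L = w L ∧ I.conc (clause 0 j) (z 0) ∧ I.IsPath L z := by
  induction k generalizing w with
  | zero => exact ⟨w, rfl, hwk, fun l => hw l l.zero_le⟩
  | succ k ih =>
    obtain ⟨v, hrole, hv⟩ := hchain k hk _ hwk
    have hpath : ∀ l, k ≤ l → l < L →
        I.role l (Function.update w k v l) (Function.update w k v (l + 1)) := by
      intro l hkl hl
      rw [Function.update_of_ne (show l + 1 ≠ k by omega)]
      rcases hkl.eq_or_lt with rfl | hkl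
      · rwa [Function.update_self]
      · rw [Function.update_of_ne hkl.ne']
        exact hw l hkl hl
    obtain ⟨z, hzL, hz⟩ := ih (Nat.le_of_succ_le hk) hpath (by rwa [Function.update_self])
    exact ⟨z, by rw [hzL, Function.update_of_ne (by omega)], hz⟩

theorem sem_pathCQ_of_satisfies [Fintype S] [Fintype J] (hC : ∀ j, ∀ p ∈ C j, p.1 < L)
    (hT : ∀ ax ∈ pathTBox L C, ax.sem I) (hA : ∀ g ∈ pathABox S X, g.sem I) {y : ℕ → S}
    (hy : ∀ j, j ∈ X ∨ ∃ p ∈ C j, y p.1 = p.2) : CQ.sem I (pathCQ S J L) := by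
  obtain ⟨hchild, hnode, hliteral, hchain⟩ := forall_mem_pathTBox_sem_iff.1 hT
  obtain ⟨hroot, hX⟩ := forall_mem_pathABox_sem_iff.1 hA
  obtain ⟨w, hw₀, hw, hletter⟩ := exists_isPath_of_children hchild hnode hroot y
  refine sem_pathCQ_iff.2 ⟨w, hw₀ ▸ hroot, hw, fun j => ?_⟩
  rcases hy j with hj | ⟨p, hp, hyp⟩
  · exact ⟨w, rfl, hw₀ ▸ hX j hj, hw⟩
  · have hpL := hC j p hp
    exact exists_isPath_of_conc_clause (hchain j) hpL (fun l _ => hw l)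
      (hliteral j p hp _ (hyp ▸ hletter p.1 hpL))

/-- The concepts of the universal model. Its elements are the words over `S`, with the last letter
first, and for every clause `j` the elements `(j, l)` of a path leading to each word marked
with `j`. -/
def treeConc (C : J → Finset (ℕ × S)) (X : Finset J) : PathConcept S J → List S ⊕ J × ℕ → Prop
  | node l, .inl w => w.length = l
  | letter l σ, .inl (τ :: w) => l = w.length + 1 ∧ τ = σ
  | clause l j, .inl [] => l = 0 ∧ j ∈ X
  | clause l j, .inl (τ :: w) => l = w.length + 1 ∧ (w.length, τ) ∈ C j
  | clause l j, .inr e => e = (j, l)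
  | _, _ => False

/-- The roles of the universal model. -/
def treeRole (C : J → Finset (ℕ × S)) (X : Finset J) (l : ℕ) :
    List S ⊕ J × ℕ → List S ⊕ J × ℕ → Prop
  | .inl u, .inl v => ∃ σ, v = σ :: u
  | .inr (j, k), v => k = l ∧ treeConc C X (clause (l + 1) j) v
  | .inl _, .inr _ => False

/-- The universal model of the path encoding. -/
def treeInterp (C : J → Finset (ℕ × S)) (X : Finset J) : Interp Unit (PathConcept S J) ℕ where
  Dom := List S ⊕ J × ℕ
  ne := ⟨.inl []⟩
  ind _ := .inl []
  conc := treeConc C X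
  role := treeRole C X

theorem sem_treeInterp_of_mem_pathTBox [Fintype S] [Fintype J] :
    ∀ ax ∈ pathTBox L C, ax.sem (treeInterp C X) := by
  refine forall_mem_pathTBox_sem_iff.2 ⟨?_, ?_, ?_, ?_⟩
  · rintro l - σ (w | e) h
    · exact ⟨.inl (σ :: w), ⟨σ, rfl⟩, congrArg (· + 1) (Eq.symm h), rfl⟩
    · exact h.elim
  · rintro l - σ ((_ | ⟨τ, w⟩) | e) h
    exacts [h.elim, h.1.symm, h.elim]
  · rintro j ⟨l, σ⟩ hp ((_ | ⟨τ, w⟩) | e) h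
    · exact h.elim
    · obtain ⟨hl, rfl⟩ := h
      obtain rfl : l = w.length := Nat.succ_injective hl
      exact ⟨rfl, hp⟩
    · exact h.elim
  · exact fun j l _ u h => ⟨.inr (j, l), ⟨rfl, h⟩, rfl⟩

theorem sem_treeInterp_of_mem_pathABox : ∀ g ∈ pathABox S X, g.sem (treeInterp C X) :=
  forall_mem_pathABox_sem_iff.2 ⟨rfl, fun _ hj => ⟨rfl, hj⟩⟩

/-- A word satisfies a clause if one of its letters does. -/
def WordSatisfies (C : J → Finset (ℕ × S)) (w : List S) (j : J) : Prop :=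
  ∃ σ u, σ :: u <:+ w ∧ (u.length, σ) ∈ C j

theorem eq_inl_or_eq_inr_of_isPath {z : ℕ → (treeInterp C X).Dom}
    (hz : (treeInterp C X).IsPath L z) {w : List S} (hzL : z L = .inl w) {l : ℕ} (hl : l ≤ L) :
    (∃ u, u <:+ w ∧ z l = .inl u) ∨ ∃ j, WordSatisfies C w j ∧ z l = .inr (j, l) := by
  induction hl using Nat.decreasingInduction with
  | self => exact .inl ⟨w, List.suffix_rfl, hzL⟩
  | of_succ l hl ih =>
    have hrole : treeRole C X l (z l) (z (l + 1)) := hz l hl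
    rcases ih with ⟨u, hu, hzl⟩ | ⟨j, hj, hzl⟩ <;> rw [hzl] at hrole <;>
      rcases h : z l with v | ⟨i, k⟩ <;> rw [h] at hrole
    · obtain ⟨σ, rfl⟩ := hrole
      exact .inl ⟨v, (List.suffix_cons σ v).trans hu, rfl⟩
    · obtain ⟨rfl, hclause⟩ := hrole
      rcases u with _ | ⟨τ, u⟩
      · exact absurd hclause.1 (Nat.succ_ne_zero k)
      · exact .inr ⟨i, ⟨τ, u, hu, hclause.2⟩, rfl⟩
    · exact hrole.elim
    · obtain ⟨rfl, hclause⟩ := hrole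
      obtain ⟨rfl, -⟩ := Prod.mk.inj hclause
      exact .inr ⟨j, hj, rfl⟩

theorem exists_satisfies_of_sem_pathCQ [Nonempty S] [Fintype J]
    (h : CQ.sem (treeInterp C X) (pathCQ S J L)) :
    ∃ y : ℕ → S, ∀ j, j ∈ X ∨ ∃ p ∈ C j, y p.1 = p.2 := by
  obtain ⟨w, hw₀, hw, hclause⟩ := sem_pathCQ_iff.1 h
  have hmain : ∀ l ≤ L, ∃ u, w l = .inl u := by
    intro l
    induction l with
    | zero =>
      rcases h₀ : w 0 with u | e
      · exact fun _ => ⟨u, rfl⟩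
      · exact (show treeConc C X (node 0) (.inr e) from h₀ ▸ hw₀).elim
    | succ l ih =>
      intro hl
      obtain ⟨u, hu⟩ := ih (by omega)
      have hrole : treeRole C X l (w l) (w (l + 1)) := hw l hl
      rw [hu] at hrole
      rcases hv : w (l + 1) with v | e
      · exact ⟨v, rfl⟩
      · exact (hv ▸ hrole).elim
  obtain ⟨u, hu⟩ := hmain L le_rfl
  refine ⟨fun l => u.reverse.getD l (Classical.arbitrary S), fun j => ?_⟩
  obtain ⟨z, hzL, hz₀, hz⟩ := hclause j
  replace hz₀ : treeConc C X (clause 0 j) (z 0) := hz₀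
  rcases eq_inl_or_eq_inr_of_isPath hz (hzL.trans hu) L.zero_le with ⟨v, -, hv⟩ | ⟨i, hi, hv⟩ <;>
    rw [hv] at hz₀
  · rcases v with _ | ⟨τ, v⟩
    · exact .inl hz₀.2
    · exact absurd hz₀.1 (Nat.succ_ne_zero _).symm
  · obtain ⟨σ, v, ⟨t, rfl⟩, hσ⟩ := hi
    obtain ⟨rfl, -⟩ := Prod.mk.inj hz₀
    exact .inr ⟨_, hσ, by simp⟩

theorem entails_pathTBox_iff [Nonempty S] [Fintype S] [Fintype J]
    (hC : ∀ j, ∀ p ∈ C j, p.1 < L) :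
    Entails (pathTBox L C) (pathABox S X) (pathCQ S J L) ↔
      ∃ y : ℕ → S, ∀ j, j ∈ X ∨ ∃ p ∈ C j, y p.1 = p.2 :=
  ⟨fun h => exists_satisfies_of_sem_pathCQ
      (h _ sem_treeInterp_of_mem_pathTBox sem_treeInterp_of_mem_pathABox),
    fun ⟨_, hy⟩ _ hT hA => sem_pathCQ_of_satisfies hC hT hA hy⟩

/-- The clauses obtained by numbering the positions that the clauses `C` talk about. -/
noncomputable def numberClauses {P : Type} [Fintype P] (C : J → Finset (P × S)) (j : J) :
    Finset (ℕ × S) :=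
  (C j).map (((Fintype.equivFin P).toEmbedding.trans Fin.valEmbedding).prodMap (.refl S))

theorem entails_pathTBox_numberClauses_iff [Nonempty S] [Fintype S] [Fintype J] {P : Type}
    [Fintype P] {C : J → Finset (P × S)} :
    Entails (pathTBox (Fintype.card P) (numberClauses C)) (pathABox S X)
        (pathCQ S J (Fintype.card P)) ↔
      ∃ y : P → S, ∀ j, j ∈ X ∨ ∃ p ∈ C j, y p.1 = p.2 := by
  let number : P ↪ ℕ := (Fintype.equivFin P).toEmbedding.trans Fin.valEmbedding
  have hlt : ∀ j, ∀ p ∈ numberClauses C j, p.1 < Fintype.card P := by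
    intro j p hp
    obtain ⟨q, -, rfl⟩ := Finset.mem_map.1 hp
    exact (Fintype.equivFin P q.1).is_lt
  rw [entails_pathTBox_iff hlt]
  simp only [numberClauses, Finset.mem_map, exists_exists_and_eq_and]
  refine ⟨fun ⟨y, hy⟩ => ⟨y ∘ number, hy⟩, fun ⟨y, hy⟩ =>
    ⟨Function.extend number y fun _ => Classical.arbitrary S, fun j => ?_⟩⟩
  exact (hy j).imp_right fun ⟨p, hp, hyp⟩ => ⟨p, hp, (number.injective.extend_apply ..).trans hyp⟩

end PathEncoding

section PolynomialGraph

variable {F : Type*} [Fintype F] {d : ℕ}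

/-- The graph of the polynomial function with coefficients `a`. -/
def polyGraph [Semiring F] (a : Fin d → F) : Finset (F × F) :=
  Finset.univ.map ⟨fun i => (i, ∑ l, a l * i ^ (l : ℕ)), fun _ _ h => congrArg Prod.fst h⟩

theorem mem_polyGraph [Semiring F] {a : Fin d → F} {e : F × F} :
    e ∈ polyGraph a ↔ ∑ l, a l * e.1 ^ (l : ℕ) = e.2 := by
  simp only [polyGraph, Finset.mem_map, Finset.mem_univ, true_and, Prod.ext_iff]
  exact ⟨by rintro ⟨_, rfl, h⟩; exact h, fun h => ⟨_, rfl, h⟩⟩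

theorem card_polyGraph [Semiring F] (a : Fin d → F) : (polyGraph a).card = Fintype.card F :=
  Finset.card_map _

theorem eq_of_subset_polyGraph [CommRing F] [IsDomain F] {m : Finset (F × F)} (hm : d ≤ m.card)
    {a b : Fin d → F} (ha : m ⊆ polyGraph a) (hb : m ⊆ polyGraph b) : a = b := by
  classical
  let poly : (Fin d → F) → Polynomial F := fun a => (Polynomial.degreeLTEquiv F d).symm a
  have heval (a : Fin d → F) (i : F) : (poly a).eval i = ∑ l, a l * i ^ (l : ℕ) := by
    simp [poly, Polynomial.eval_eq_sum_degreeLTEquiv (Subtype.prop _)]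
  have hinj : Set.InjOn Prod.fst (m : Set (F × F)) := fun e he e' he' h =>
    Prod.ext h (by rw [← mem_polyGraph.1 (ha he), ← mem_polyGraph.1 (ha he'), h])
  have hdeg (a : Fin d → F) : (poly a).degree < (m.image Prod.fst).card := by
    rw [Finset.card_image_of_injOn hinj]
    exact (Polynomial.mem_degreeLT.1 (Subtype.prop _)).trans_le (Nat.cast_le.2 hm)
  have hpoly : poly a = poly b := by
    refine Polynomial.eq_of_degrees_lt_of_eval_finset_eq _ (hdeg a) (hdeg b) fun i hi => ?_
    obtain ⟨e, he, rfl⟩ := Finset.mem_image.1 hi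
    rw [heval, heval, mem_polyGraph.1 (ha he), mem_polyGraph.1 (hb he)]
  exact (Polynomial.degreeLTEquiv F d).symm.injective (Subtype.ext hpoly)

end PolynomialGraph

section PolynomialEncoding

/-- The positions of a word describing the evaluation of a polynomial at all points: its
coefficients and, for every point, the partial sums. -/
abbrev PolyPos (F : Type) (d : ℕ) : Type := Fin d ⊕ F × Fin (d + 1)

/-- The clauses saying that a word describes the evaluation of a polynomial and that its graph
avoids all points: one for each addition of a monomial with given partial sum and coefficient,
one for each initial partial sum, and one for each point of the plane. -/
abbrev PolyClause (F : Type) (d : ℕ) : Type := (F × Fin d × F × F) ⊕ (F ⊕ F × F)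

variable {F : Type} [Fintype F] {d : ℕ}

theorem card_polyPos_le [Nonempty F] (hd : 1 ≤ d) :
    Fintype.card (PolyPos F d) ≤ 3 * (Fintype.card F * d) := by
  have hF : 0 < Fintype.card F := Fintype.card_pos
  simp only [Fintype.card_sum, Fintype.card_prod, Fintype.card_fin]
  nlinarith [Nat.mul_le_mul_right d hF, Nat.mul_le_mul_left (Fintype.card F) hd]

theorem card_polyClause_le [Nonempty F] (hd : 1 ≤ d) :
    Fintype.card (PolyClause F d) ≤ 3 * (Fintype.card F ^ 3 * d) := by
  have hF : 1 ≤ Fintype.card F := Fintype.card_pos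
  have h₁ : Fintype.card F ≤ Fintype.card F ^ 3 * d :=
    (Nat.le_self_pow (by norm_num) _).trans (Nat.le_mul_of_pos_right _ hd)
  have h₂ : Fintype.card F ^ 2 ≤ Fintype.card F ^ 3 * d :=
    (Nat.pow_le_pow_right hF (by norm_num)).trans (Nat.le_mul_of_pos_right _ hd)
  simp only [Fintype.card_sum, Fintype.card_prod, Fintype.card_fin]
  linarith

variable (F d) in
/-- The query asking for a path of words over the positions and clauses of polynomial evaluation. -/
noncomputable def polyCQ : CQ Unit (PathConcept F (PolyClause F d)) ℕ :=
  pathCQ F (PolyClause F d) (Fintype.card (PolyPos F d))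

theorem cqSize_polyCQ_le [Nonempty F] (hd : 1 ≤ d) :
    cqSize (polyCQ F d) ≤ 96 * (Fintype.card F ^ 4 * d ^ 2) := by
  have hF : 1 ≤ Fintype.card F := Fintype.card_pos
  have hL := card_polyPos_le (F := F) hd
  have hJ := card_polyClause_le (F := F) hd
  rw [polyCQ, cqSize_pathCQ]
  generalize Fintype.card (PolyPos F d) = L at *
  generalize Fintype.card (PolyClause F d) = J at *
  generalize Fintype.card F = p at *
  have hp₀ : 1 ≤ p ^ 4 * d ^ 2 := Nat.one_le_iff_ne_zero.2 (by positivity)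
  have hp₁ : p * d ≤ p ^ 4 * d ^ 2 := by gcongr <;> exact Nat.le_self_pow (by norm_num) _
  have hp₃ : p ^ 3 * d ≤ p ^ 4 * d ^ 2 := by
    gcongr
    · norm_num
    · exact Nat.le_self_pow two_ne_zero d
  calc _ ≤ (3 * (p ^ 3 * d) + 1) * (2 + 3 * (p * d) * 3) := by gcongr
    _ = 2 + 9 * (p * d) + 6 * (p ^ 3 * d) + 27 * (p ^ 4 * d ^ 2) := by ring
    _ ≤ _ := by lia

variable [DecidableEq F] [Semiring F]

/-- The literals of the clauses of polynomial evaluation. The first kind of clause is the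
implication `s l = u ∧ a l = v → s (l + 1) = u + v * i ^ l` about the partial sums `s` at `i` and
the coefficients `a`. -/
def polyClause : PolyClause F d → Finset (PolyPos F d × F)
  | .inl (i, l, u, v) => ({.inr (i, l.castSucc)} ×ˢ {u}ᶜ ∪ {.inl l} ×ˢ {v}ᶜ) ∪
      {(.inr (i, l.succ), u + v * i ^ (l : ℕ))}
  | .inr (.inl i) => {(.inr (i, 0), 0)}
  | .inr (.inr e) => {.inr (e.1, Fin.last d)} ×ˢ {e.2}ᶜ

/-- The clause excluding a point from the graph. -/
def graphClause : F × F ↪ PolyClause F d := Function.Embedding.inr.trans Function.Embedding.inr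

theorem satisfies_polyClause_iff {x : Finset (F × F)} {y : PolyPos F d → F} :
    (∀ j, j ∈ x.map graphClause ∨ ∃ p ∈ polyClause j, y p.1 = p.2) ↔
      (∀ i l, y (.inr (i, l.succ)) = y (.inr (i, l.castSucc)) + y (.inl l) * i ^ (l : ℕ)) ∧
      (∀ i, y (.inr (i, 0)) = 0) ∧ ∀ i, (i, y (.inr (i, Fin.last d))) ∈ x := by
  have hstep (i l u v) : (∃ p ∈ polyClause (.inl (i, l, u, v)), y p.1 = p.2) ↔
      (y (.inr (i, l.castSucc)) = u → y (.inl l) = v →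
        y (.inr (i, l.succ)) = u + v * i ^ (l : ℕ)) := by
    simp only [polyClause, Finset.mem_union, Finset.mem_product, Finset.mem_singleton,
      Finset.mem_compl, Prod.exists, or_and_right, exists_or, and_assoc,
      exists_and_left, exists_eq_left, exists_eq_right']
    tauto
  have hinit (i) : (∃ p ∈ polyClause (d := d) (.inr (.inl i)), y p.1 = p.2) ↔
      y (.inr (i, 0)) = 0 := by
    simp [polyClause]
  have hpoint (e) : (∃ p ∈ polyClause (d := d) (.inr (.inr e)), y p.1 = p.2) ↔
      y (.inr (e.1, Fin.last d)) ≠ e.2 := by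
    simp [polyClause]
  simp only [Sum.forall, hstep, hinit, hpoint, graphClause, Prod.forall, Finset.mem_map,
    Function.Embedding.trans_apply, Function.Embedding.inr_apply, reduceCtorEq, Sum.inr.injEq,
    exists_eq_right, and_false, exists_false, false_or, forall_eq', ← imp_iff_or_not, ne_eq]
  refine and_congr_left' ⟨fun h i l => h i l _ _ rfl rfl, ?_⟩
  rintro h i l _ _ rfl rfl
  exact h i l

theorem exists_satisfies_polyClause_iff {x : Finset (F × F)} :
    (∃ y : PolyPos F d → F, ∀ j, j ∈ x.map graphClause ∨ ∃ p ∈ polyClause j, y p.1 = p.2) ↔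
      ∃ a : Fin d → F, polyGraph a ⊆ x := by
  have hsum (a : Fin d → F) (i : F) : Fin.partialSum (fun l => a l * i ^ (l : ℕ)) (Fin.last d) =
      ∑ l, a l * i ^ (l : ℕ) := by
    simp [Fin.partialSum, List.take_of_length_le, List.sum_ofFn]
  simp only [satisfies_polyClause_iff]
  constructor
  · rintro ⟨y, hstep, hinit, hpoint⟩
    refine ⟨fun l => y (.inl l), fun e he => ?_⟩
    have hval (l : Fin (d + 1)) : y (.inr (e.1, l)) =
        Fin.partialSum (fun l => y (.inl l) * e.1 ^ (l : ℕ)) l := by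
      induction l using Fin.induction with
      | zero => rw [hinit, Fin.partialSum_zero]
      | succ l ih => rw [hstep, ih, Fin.partialSum_succ]
    simpa only [hval, hsum, mem_polyGraph.1 he] using hpoint e.1
  · rintro ⟨a, ha⟩
    refine ⟨Sum.elim a fun e => Fin.partialSum (fun l => a l * e.1 ^ (l : ℕ)) e.2,
      fun i l => Fin.partialSum_succ _ _, fun i => Fin.partialSum_zero _, fun i => ?_⟩
    exact ha (mem_polyGraph.2 (hsum a i).symm)

variable (F d) in
/-- The TBox saying that the graph of some polynomial with `d` coefficients is in the data. -/
noncomputable def polyTBox : List (Ax (PathConcept F (PolyClause F d)) ℕ) :=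
  pathTBox (Fintype.card (PolyPos F d)) (numberClauses polyClause)

/-- The data describing the points `x`. -/
noncomputable def polyABox (d : ℕ) (x : Finset (F × F)) :
    ABox Unit (PathConcept F (PolyClause F d)) ℕ :=
  pathABox F (x.map graphClause)

theorem entails_polyTBox_iff {x : Finset (F × F)} :
    Entails (polyTBox F d) (polyABox d x) (polyCQ F d) ↔ ∃ a : Fin d → F, polyGraph a ⊆ x :=
  entails_pathTBox_numberClauses_iff.trans exists_satisfies_polyClause_iff

theorem card_polyClause_literals_le (j : PolyClause F d) :
    (polyClause j).card ≤ 2 * Fintype.card F := by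
  have hF : 1 ≤ Fintype.card F := Fintype.card_pos
  rcases j with ⟨i, l, u, v⟩ | i | e
  · refine (Finset.card_union_le _ _).trans
      ((Nat.add_le_add_right (Finset.card_union_le _ _) _).trans ?_)
    simp only [Finset.card_product, Finset.card_singleton, Finset.card_compl]
    lia
  · simp only [polyClause, Finset.card_singleton]
    lia
  · simp only [polyClause, Finset.card_product, Finset.card_singleton, Finset.card_compl]
    lia

theorem tbSize_polyTBox_le (hd : 1 ≤ d) :
    tbSize (polyTBox F d) ≤ 96 * (Fintype.card F ^ 4 * d ^ 2) := by
  have hF : 1 ≤ Fintype.card F := Fintype.card_pos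
  have hL := card_polyPos_le (F := F) hd
  have hJ := card_polyClause_le (F := F) hd
  have hC : ∑ j : PolyClause F d, (numberClauses polyClause j).card ≤
      Fintype.card (PolyClause F d) * (2 * Fintype.card F) := by
    simpa [numberClauses] using Finset.sum_le_card_nsmul Finset.univ _ _
      fun j _ => card_polyClause_literals_le (F := F) (d := d) j
  rw [polyTBox, tbSize_pathTBox]
  generalize Fintype.card (PolyPos F d) = L at *
  generalize Fintype.card (PolyClause F d) = J at *
  generalize Fintype.card F = p at *
  have hp₂ : p ^ 2 * d ≤ p ^ 4 * d ^ 2 := by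
    gcongr
    · norm_num
    · exact Nat.le_self_pow two_ne_zero d
  have hp₄ : p ^ 4 * d ≤ p ^ 4 * d ^ 2 := by gcongr; exact Nat.le_self_pow two_ne_zero d
  calc _ ≤ 3 * (p * d) * p * 8 + 3 * (p ^ 3 * d) * (2 * p) * 3 +
        3 * (p ^ 3 * d) * (3 * (p * d)) * 5 := by gcongr; exact hC.trans (by gcongr)
    _ = 24 * (p ^ 2 * d) + 18 * (p ^ 4 * d) + 45 * (p ^ 4 * d ^ 2) := by ring
    _ ≤ _ := by lia

end PolynomialEncoding

section LowerBound

variable {EK EC ER E : Type}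

theorem over_of_mem_map_pathABox {S J : Type} {X : Finset J}
    {g : GAtom (Unit ⊕ EK) (PathConcept S J ⊕ EC) (ℕ ⊕ ER)}
    (hg : g ∈ (pathABox S X).map (GAtom.map .inl .inl .inl)) : g.Over (.inl ()) := by
  obtain ⟨⟨_⟩ | ⟨_⟩, hg', rfl⟩ := List.mem_map.1 hg
  · rfl
  · simp [pathABox] at hg'

theorem node_map_pathABox {S J : Type} (X : Finset J) :
    {v : DPred (PathConcept S J ⊕ EC) (ℕ ⊕ ER) E × ℕ |
        ∃ g ∈ (pathABox S X).map (GAtom.map (K' := Unit ⊕ EK) .inl .inl .inl), g.node = v} =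
      {(.inl (.inl (.inl (.node 0))), 1)} ∪
        (fun j => (.inl (.inl (.inl (.clause 0 j))), 1)) '' (X : Set J) := by
  ext v
  simp [pathABox, GAtom.map, GAtom.node, eq_comm]

theorem pow_le_two_mul_length_mul_pow_of_isNDLRewriting {F : Type} [Field F] [Fintype F]
    [DecidableEq F] {d k M : ℕ} [NeZero M]
    {Prog : DProgram (Unit ⊕ EK) (DPred (PathConcept F (PolyClause F d) ⊕ EC) (ℕ ⊕ ER) E)}
    {G : DPred (PathConcept F (PolyClause F d) ⊕ EC) (ℕ ⊕ ER) E} (hd : 2 ≤ d)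
    (hk : d + k ≤ Fintype.card F) (hMF : M ≤ Fintype.card F)
    (hM : (Fintype.card F : ℝ) ^ d * (1 - 1 / M) ^ k ≤ 1 / 2)
    (h : IsNDLRewriting ((polyTBox F d).map (Ax.map .inl .inl))
      ((polyCQ F d).map .inl .inl .inl) Prog G) :
    M ^ d ≤ 2 * (Prog.length * d ^ d) := by
  obtain ⟨hProg, hrec, hrew⟩ := h
  have hder (x : Set (F × F)) : Derivable (groundProgram (.inl ()) Prog)
      ({(.inl (.inl (.inl (.node 0))), 1)} ∪
        (fun e => (.inl (.inl (.inl (.clause 0 (graphClause e)))), 1)) '' x) (G, 0) ↔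
      ∃ a : Fin d → F, ↑(polyGraph a) ⊆ x := by
    lift x to Finset (F × F) using x.toFinite
    have hx := node_map_pathABox (EK := EK) (EC := EC) (ER := ER) (E := E) (S := F)
      (x.map (graphClause (d := d)))
    rw [Finset.coe_map, Set.image_image] at hx
    rw [← hx, ← dEntails_iff_derivable hProg fun _ => over_of_mem_map_pathABox, ← hrew,
      entails_map_inl_iff]
    exact entails_polyTBox_iff.trans (by simp only [Finset.coe_subset])
  refine (pow_le_two_mul_card_mul_pow_of_derivable_iff (acyclic_groundProgram hrec _) ?_ hd
    (fun a => hk.trans_eq (card_polyGraph a).symm)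
    (fun m hm a b => eq_of_subset_polyGraph hm.ge) ?_ ?_ hder).trans ?_
  · intro e e' h
    simpa using h
  · simpa using Nat.pow_le_pow_left hMF d
  · simpa using hM
  · gcongr
    exact card_groundProgram_le _ _

end LowerBound

section Parameters

theorem one_sub_inv_pow_self_le_half {M : ℕ} (hM : M ≠ 0) : (1 - 1 / M : ℝ) ^ M ≤ 1 / 2 := by
  have h := Real.one_sub_div_pow_le_exp_neg (n := M) (t := 1)
    (by exact_mod_cast Nat.one_le_iff_ne_zero.2 hM)
  exact h.trans (by simpa using Real.exp_neg_one_lt_half.le)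

theorem pow_mul_one_sub_inv_pow_le_half {p m d M k : ℕ} (hM : M ≠ 0) (hp : p ≤ 2 ^ m)
    (hk : M * (m * d + 1) ≤ k) : (p : ℝ) ^ d * (1 - 1 / M) ^ k ≤ 1 / 2 := by
  have hhalf := one_sub_inv_pow_self_le_half hM
  have hM₁ : (1 / M : ℝ) ≤ 1 := (one_div (M : ℝ)).trans_le (Nat.cast_inv_le_one M)
  have hM₀ : (0 : ℝ) ≤ 1 / M := by positivity
  generalize (1 / M : ℝ) = q at *
  calc (p : ℝ) ^ d * (1 - q) ^ k ≤ (2 ^ m) ^ d * (1 - q) ^ (M * (m * d + 1)) := by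
        refine mul_le_mul (pow_le_pow_left₀ p.cast_nonneg (by exact_mod_cast hp) d)
          (pow_le_pow_of_le_one ?_ ?_ hk) (pow_nonneg ?_ k) (by positivity) <;> linarith
    _ ≤ (2 ^ m) ^ d * (1 / 2) ^ (m * d + 1) := by
        rw [pow_mul (1 - q)]
        have : 0 ≤ (1 - q) ^ M := pow_nonneg (by linarith) M
        gcongr
    _ = 1 / 2 := by rw [← pow_mul, pow_succ, ← mul_assoc, ← mul_pow]; norm_num

theorem eight_mul_pow_five_le_two_pow {w : ℕ} (hw : 30 ≤ w) : 8 * w ^ 5 ≤ 2 ^ w := by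
  induction w, hw using Nat.le_induction with
  | base => norm_num
  | succ w hw ih =>
    have hstep : (w + 1) ^ 5 ≤ 2 * w ^ 5 := by
      obtain ⟨v, rfl⟩ := Nat.exists_eq_add_of_le' hw
      ring_nf
      lia
    calc 8 * (w + 1) ^ 5 ≤ 8 * w ^ 5 * 2 := by lia
      _ ≤ 2 ^ w * 2 := by gcongr
      _ = _ := (pow_succ 2 w).symm

theorem two_pow_le_two_mul_length_of_isNDLRewriting {F : Type} [Field F] [Fintype F]
    [DecidableEq F] {EK EC ER E : Type} {w : ℕ} (hw : 30 ≤ w)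
    (hF₁ : 4 * w ^ 5 ≤ Fintype.card F) (hF₂ : Fintype.card F ≤ 8 * w ^ 5)
    {Prog : DProgram (Unit ⊕ EK) (DPred (PathConcept F (PolyClause F (w ^ 2)) ⊕ EC) (ℕ ⊕ ER) E)}
    {G : DPred (PathConcept F (PolyClause F (w ^ 2)) ⊕ EC) (ℕ ⊕ ER) E}
    (h : IsNDLRewriting ((polyTBox F (w ^ 2)).map (Ax.map .inl .inl))
      ((polyCQ F (w ^ 2)).map .inl .inl .inl) Prog G) :
    2 ^ w ^ 2 ≤ 2 * Prog.length := by
  have : NeZero (2 * w ^ 2) := ⟨by positivity⟩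
  have hk : w ^ 2 + 2 * w ^ 2 * (w * w ^ 2 + 1) ≤ 4 * w ^ 5 := by
    have := Nat.pow_le_pow_right (show 0 < w by lia) (show 2 ≤ 5 by simp)
    have : 2 * w ^ 2 ≤ w ^ 5 := by
      rw [show w ^ 5 = w ^ 3 * w ^ 2 by ring]
      gcongr
      nlinarith [Nat.pow_le_pow_left hw 3]
    linarith [show w ^ 2 * (w * w ^ 2) = w ^ 5 by ring]
  have hle := pow_le_two_mul_length_mul_pow_of_isNDLRewriting (M := 2 * w ^ 2) (by nlinarith)
    (hk.trans hF₁) (by nlinarith) (pow_mul_one_sub_inv_pow_le_half (NeZero.ne _)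
      (hF₂.trans (eight_mul_pow_five_le_two_pow hw)) le_rfl) h
  rw [mul_pow, ← mul_assoc] at hle
  exact le_of_mul_le_mul_right hle (by positivity)

theorem two_rpow_eighth_mul_rpow_le {w n b : ℕ} (hw : 30 ≤ w) (hn : n ≤ (w + 1) ^ 24)
    (hb : 2 ^ w ^ 2 ≤ 2 * b) : (2 : ℝ) ^ (1 / 8 * (n : ℝ) ^ ((1 : ℝ) / 12)) ≤ b := by
  have hw' : (30 : ℝ) ≤ w := by exact_mod_cast hw
  have hroot : (n : ℝ) ^ ((1 : ℝ) / 12) ≤ (w + 1) ^ 2 := by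
    rw [one_div, Real.rpow_inv_le_iff_of_pos n.cast_nonneg (sq_nonneg _) (by norm_num),
      Real.rpow_ofNat, ← pow_mul]
    exact_mod_cast hn
  calc (2 : ℝ) ^ (1 / 8 * (n : ℝ) ^ ((1 : ℝ) / 12)) ≤ 2 ^ ((w ^ 2 : ℕ) - 1 : ℝ) := by
        gcongr
        · norm_num
        · push_cast
          nlinarith only [hroot, hw']
    _ = 2 ^ w ^ 2 / 2 := by rw [Real.rpow_sub_one two_ne_zero, Real.rpow_natCast]
    _ ≤ b := by
        rw [div_le_iff₀' two_pos]
        exact_mod_cast hb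

theorem length_le_progSize {K PV : Type} (Prog : DProgram K PV) :
    Prog.length ≤ progSize Prog := by
  simpa [progSize] using List.card_nsmul_le_sum (Prog.map DClause.size) 1 (by
    simp [DClause.size, add_assoc])

theorem natCast_div_logb_two_le (n : ℕ) : (n : ℝ) / Real.logb 2 n ≤ n := by
  rcases lt_or_ge n 2 with hn | hn
  · interval_cases n <;> simp
  · refine div_le_self n.cast_nonneg ?_
    rw [Real.le_logb_iff_rpow_le one_lt_two (by positivity)]
    simpa using hn

end Parameters

theorem statement14_general :
    ∃ (c : ℕ) (ε : ℝ) (n₀ : ℕ), 0 < c ∧ 0 < ε ∧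
      ∀ n : ℕ,
        ∃ (CN RN : Type) (T : List (Ax CN RN)) (q : CQ Unit CN RN),
          tbSize T ≤ c * n ∧ cqSize q ≤ c * n ∧
          (n₀ ≤ n →
            ∀ (EK EC ER E : Type)
              (Prog : DProgram (Unit ⊕ EK) (DPred (CN ⊕ EC) (RN ⊕ ER) E))
              (G : DPred (CN ⊕ EC) (RN ⊕ ER) E),
              IsNDLRewriting (T.map (Ax.map Sum.inl Sum.inl))
                (q.map Sum.inl Sum.inl Sum.inl) Prog G →
              (2 : ℝ) ^ (ε * (n : ℝ) ^ ((1 : ℝ) / 12)) ≤ (Prog.length : ℝ)) := by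
  refine ⟨96 * 8 ^ 4, 1 / 8, 30 ^ 24, by norm_num, by norm_num, fun n => ?_⟩
  by_cases hn : 30 ^ 24 ≤ n
  swap
  · exact ⟨Unit, Unit, [], [], by simp [tbSize], by simp [cqSize], fun h => absurd h hn⟩
  set w := Nat.nthRoot 24 n
  have hw : 30 ≤ w := (Nat.le_nthRoot_iff (by norm_num)).2 hn
  have hwn : w ^ 24 ≤ n := Nat.pow_nthRoot_le (.inl (by norm_num))
  have hnw : n < (w + 1) ^ 24 := Nat.lt_pow_nthRoot_add_one (by norm_num) n
  obtain ⟨p, hp, hp₁, hp₂⟩ := Nat.exists_prime_lt_and_le_two_mul (4 * w ^ 5) (by positivity)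
  rw [← mul_assoc] at hp₂
  have := Fact.mk hp
  have hsize : 96 * (Fintype.card (ZMod p) ^ 4 * (w ^ 2) ^ 2) ≤ 96 * 8 ^ 4 * n :=
    calc _ ≤ 96 * ((8 * w ^ 5) ^ 4 * (w ^ 2) ^ 2) := by rw [ZMod.card]; gcongr; exact hp₂
      _ = 96 * 8 ^ 4 * w ^ 24 := by ring
      _ ≤ 96 * 8 ^ 4 * n := by gcongr
  have hw₂ : 1 ≤ w ^ 2 := Nat.one_le_pow _ _ (by lia)
  refine ⟨_, _, polyTBox (ZMod p) (w ^ 2), polyCQ (ZMod p) (w ^ 2),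
    (tbSize_polyTBox_le hw₂).trans hsize, (cqSize_polyCQ_le hw₂).trans hsize,
    fun _ EK EC ER E Prog G hrew => two_rpow_eighth_mul_rpow_le hw hnw.le ?_⟩
  exact two_pow_le_two_mul_length_of_isNDLRewriting hw ((ZMod.card p).symm ▸ hp₁.le)
    ((ZMod.card p).symm ▸ hp₂) hrew

/-- There exist constants `c > 0` and `ε > 0` and, for each
`n ≥ 1`, a conjunctive query `q_n` and an OWL 2 QL TBox `T_n` with
`|q_n| ≤ c·n` and `|T_n| ≤ c·n`, such that for all sufficiently large `n`,
every NDL-rewriting for `q_n` and `T_n` over any signature containing the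
symbols of `q_n` and `T_n` (formalised as their signature extended by
arbitrary further constants `EK`, concept names `EC` and role names `ER`;
the program may use arbitrary further predicates `E`) has size at least
`2^{ε·(n/log n)^{1/12}}`. -/
theorem statement14 :
    ∃ (c : ℕ) (ε : ℝ) (n₀ : ℕ), 0 < c ∧ 0 < ε ∧
      ∀ n : ℕ, 1 ≤ n →
        ∃ (CN RN : Type) (T : List (Ax CN RN)) (q : CQ Unit CN RN),
          tbSize T ≤ c * n ∧ cqSize q ≤ c * n ∧
          (n₀ ≤ n →
            ∀ (EK EC ER E : Type)
              (Prog : DProgram (Unit ⊕ EK) (DPred (CN ⊕ EC) (RN ⊕ ER) E))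
              (G : DPred (CN ⊕ EC) (RN ⊕ ER) E),
              IsNDLRewriting (T.map (Ax.map Sum.inl Sum.inl))
                (q.map Sum.inl Sum.inl Sum.inl) Prog G →
              (2 : ℝ) ^ (ε * ((n : ℝ) / Real.logb 2 (n : ℝ)) ^ ((1 : ℝ) / 12)) ≤
                (progSize Prog : ℝ)) := by
  obtain ⟨c, ε, n₀, hc, hε, h⟩ := statement14_general
  refine ⟨c, ε, n₀, hc, hε, fun n hn₁ => ?_⟩
  obtain ⟨CN, RN, T, q, hT, hq, hTq⟩ := h n
  refine ⟨CN, RN, T, q, hT, hq, fun hn EK EC ER E Prog G hrew => ?_⟩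
  calc (2 : ℝ) ^ (ε * ((n : ℝ) / Real.logb 2 (n : ℝ)) ^ ((1 : ℝ) / 12))
      ≤ 2 ^ (ε * (n : ℝ) ^ ((1 : ℝ) / 12)) := by
        gcongr
        · exact one_le_two
        · have := Real.logb_nonneg one_lt_two (Nat.one_le_cast.2 hn₁ : (1 : ℝ) ≤ n)
          positivity
        · exact natCast_div_logb_two_le n
    _ ≤ Prog.length := hTq hn EK EC ER E Prog G hrew
    _ ≤ progSize Prog := by exact_mod_cast length_le_progSize Prog

end QRew
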